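/- arXiv:2407.08419 — 3 statements merged into one kernel-verified Lean document; each statement's English description precedes it below -/
import Mathlib

section
/- Let n ≥ 1, let S = ℂ[x_1,…,x_n], let L be the fraction field of S, let G be a finite subgroup of GL_n(ℂ), and let φ_1,…,φ_n ∈ S be algebraically independent over ℂ with each φ_i G-invariant. Let D_1,…,D_n : L → L be ℂ-linear derivations satisfying D_j(φ_i) = δ_{ij} for all i, j, and for each ℓ set A_ℓ := (D_ℓ J_φ)·J_φ^{-1}, where D_ℓ is applied entrywise to J_φ viewed over L. Then every entry of every A_ℓ is fixed by γ_M for every M ∈ G; that is, the entries of A_1,…,A_n lie in the fixed field L^G. -/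
open MvPolynomial

noncomputable abbrev polyS (n : ℕ) := MvPolynomial (Fin n) ℂ
noncomputable abbrev fracL (n : ℕ) := FractionRing (polyS n)
noncomputable abbrev toL (n : ℕ) : polyS n →+* fracL n := algebraMap (polyS n) (fracL n)

/-- The action of `M ∈ GL_n(ℂ)` on polynomials: `γ_M(f)(x) = f(x · M⁻ᵀ)`,
i.e. the variable `x_i` is substituted by `∑_k (M⁻¹)_{i k} · x_k`. -/
noncomputable def gammaAct (n : ℕ) (M : GL (Fin n) ℂ) : polyS n →ₐ[ℂ] polyS n :=
  MvPolynomial.aeval (fun i => ∑ k, MvPolynomial.C (((M⁻¹ : GL (Fin n) ℂ) :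
    Matrix (Fin n) (Fin n) ℂ) i k) * MvPolynomial.X k)

/-- The Jacobian matrix of an `n`-tuple of polynomials: `(i,j)` entry `∂φ_i/∂x_j`. -/
noncomputable def jacMat {n : ℕ} (φ : Fin n → polyS n) : Matrix (Fin n) (Fin n) (polyS n) :=
  Matrix.of fun i j => MvPolynomial.pderiv j (φ i)

/-!
Write `B` for the matrix `D_k(x_j)`. The chain rule turns `D_k(φ_i) = δ_{ik}` into `J_φ B = 1`, so
`J_φ` is invertible and a derivation of `L` is determined by its values on the `φ_i`. For `σ = γ_M`
the derivations `D_ℓ` and `σ D_ℓ σ⁻¹` agree on every `φ_i`, hence `σ` commutes with `D_ℓ`. If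
`σ(x) = N x` with `N` constant, applying `D_k` gives `σ(B) = N B`, and inverting,
`σ(J_φ) N = J_φ`. Finally `A_ℓ` is the logarithmic derivative of `J_φ`, which does not change when
`J_φ` is multiplied on the right by a constant invertible matrix.
-/

section Derivation

variable {R A : Type*} [CommRing R] [CommRing A] [Algebra R A]

theorem derivation_ext_of_formallyUnramified {M : Type*} [AddCommGroup M] [Module R M] [Module A M]
    (S : Type*) [CommRing S] [Algebra S A] [Module S M] [IsScalarTower S A M]
    [Algebra.FormallyUnramified S A] {D E : Derivation R A M}
    (h : ∀ s : S, D (algebraMap S A s) = E (algebraMap S A s)) : D = E := by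
  let F : Derivation S A M := Derivation.mk'
    { toFun := D - E
      map_add' := fun a b => by rw [← Derivation.coe_sub, map_add]
      map_smul' := fun s a => by
        simp [Algebra.smul_def, h, ← smul_sub, algebraMap_smul] }
    (fun a b => (D - E).leibniz a b)
  have hF : F = 0 :=
    (KaehlerDifferential.linearMapEquivDerivation S A).symm.injective (Subsingleton.elim _ _)
  ext a
  exact sub_eq_zero.mp (Derivation.congr_fun hF a)

/-- The transport `σ ∘ D ∘ σ⁻¹` of a derivation `D` of `A` along an isomorphism `σ : A ≃ B`. For
`B = A`, commutation of `σ` with `D` reads `derivationConj σ D = D`, an equality of derivations. -/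
def derivationConj {B : Type*} [CommRing B] [Algebra R B] (σ : A ≃ₐ[R] B) (D : Derivation R A A) :
    Derivation R B B :=
  Derivation.mk' (σ.toLinearMap ∘ₗ D.toLinearMap ∘ₗ σ.symm.toLinearMap) fun a b => by simp

theorem derivationConj_apply {B : Type*} [CommRing B] [Algebra R B] (σ : A ≃ₐ[R] B)
    (D : Derivation R A A) (b : B) : derivationConj σ D b = σ (D (σ.symm b)) :=
  rfl

end Derivation

section MatrixLogDeriv

variable {ι R A : Type*} [Fintype ι] [CommRing R] [CommRing A] [Algebra R A]

theorem map_derivation_mul_map_algebraMap {m p : Type*} (D : Derivation R A A) (P : Matrix m ι A)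
    (N : Matrix ι p R) :
    (P * N.map (algebraMap R A)).map D = P.map D * N.map (algebraMap R A) := by
  ext i j
  simp [Matrix.mul_apply, mul_comm]

variable [DecidableEq ι]

/-- The logarithmic derivative `D(P) P⁻¹` of a square matrix, with `D` applied entrywise. It is
meaningful for invertible `P`; otherwise `P⁻¹ = 0` by convention. -/
noncomputable def matrixLogDeriv (D : Derivation R A A) (P : Matrix ι ι A) : Matrix ι ι A :=
  P.map D * P⁻¹

theorem matrixLogDeriv_mul_map_algebraMap (D : Derivation R A A) (P : Matrix ι ι A)
    {N : Matrix ι ι R} (hN : IsUnit (N.map (algebraMap R A))) :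
    matrixLogDeriv D (P * N.map (algebraMap R A)) = matrixLogDeriv D P := by
  rw [matrixLogDeriv, map_derivation_mul_map_algebraMap, Matrix.mul_inv_rev, Matrix.mul_assoc,
    Matrix.mul_nonsing_inv_cancel_left _ _ ((Matrix.isUnit_iff_isUnit_det _).mp hN), matrixLogDeriv]

theorem map_nonsing_inv_of_isUnit {B : Type*} [CommRing B] (σ : A →+* B) {P : Matrix ι ι A}
    (hP : IsUnit P) : P⁻¹.map σ = (P.map σ)⁻¹ := by
  refine (Matrix.inv_eq_right_inv ?_).symm
  rw [← Matrix.map_mul, Matrix.mul_nonsing_inv _ ((Matrix.isUnit_iff_isUnit_det _).mp hP),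
    Matrix.map_one _ (map_zero σ) (map_one σ)]

theorem map_matrixLogDeriv {D : Derivation R A A} {σ : A →+* A}
    (hσD : ∀ a, σ (D a) = D (σ a)) {P : Matrix ι ι A} (hP : IsUnit P) :
    (matrixLogDeriv D P).map σ = matrixLogDeriv D (P.map σ) := by
  have hDP : (P.map D).map σ = (P.map σ).map D := by
    ext i j
    exact hσD (P i j)
  rw [matrixLogDeriv, Matrix.map_mul, hDP, map_nonsing_inv_of_isUnit σ hP, matrixLogDeriv]

end MatrixLogDeriv

section Jacobian

variable {κ ι k L : Type*} [CommRing k] [CommRing L] [Algebra k L] [Algebra (MvPolynomial ι k) L]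

variable (L) in
/-- The Jacobian matrix `∂φ_i/∂x_j` of a family of polynomials, with entries viewed in an algebra
`L` over the polynomial ring, such as its fraction field. -/
noncomputable def jacobianMatrix (φ : κ → MvPolynomial ι k) : Matrix κ ι L :=
  Matrix.of fun i j => algebraMap (MvPolynomial ι k) L (pderiv j (φ i))

theorem derivation_eq_sum_pderiv_smul {M : Type*} [AddCommGroup M] [Module k M]
    [Module (MvPolynomial ι k) M] [IsScalarTower k (MvPolynomial ι k) M] [Fintype ι]
    (D : Derivation k (MvPolynomial ι k) M) (f : MvPolynomial ι k) :
    D f = ∑ j, pderiv j f • D (X j) := by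
  classical
  let E : Derivation k (MvPolynomial ι k) M :=
    ∑ j, (LinearMap.toSpanSingleton _ M (D (X j))).compDer (pderiv j)
  have hE (g : MvPolynomial ι k) : E g = ∑ j, pderiv j g • D (X j) := by
    rw [← Derivation.coeFnAddMonoidHom_apply, map_sum, Finset.sum_apply]
    rfl
  have hDE : D = E := derivation_ext fun i => by simp [hE, pderiv_X, Pi.single_apply]
  rw [← hE, ← hDE]

variable [IsScalarTower k (MvPolynomial ι k) L] [Fintype ι]

theorem jacobianMatrix_mulVec (φ : κ → MvPolynomial ι k) (D : Derivation k L L) :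
    (jacobianMatrix L φ).mulVec (fun j => D (algebraMap (MvPolynomial ι k) L (X j))) =
      fun i => D (algebraMap (MvPolynomial ι k) L (φ i)) := by
  ext i
  simpa [jacobianMatrix, Matrix.mulVec, dotProduct, Algebra.smul_def] using
    (derivation_eq_sum_pderiv_smul (D.compAlgebraMap (MvPolynomial ι k)) (φ i)).symm

variable [DecidableEq ι] {φ : ι → MvPolynomial ι k}

theorem jacobianMatrix_mul_eq_one {D : ι → Derivation k L L}
    (hD : ∀ j i, D j (algebraMap (MvPolynomial ι k) L (φ i)) = if i = j then 1 else 0) :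
    jacobianMatrix L φ *
      Matrix.of (fun j l => D l (algebraMap (MvPolynomial ι k) L (X j))) = 1 := by
  ext i l
  rw [Matrix.one_apply, ← hD l i]
  exact congrFun (jacobianMatrix_mulVec φ (D l)) i

theorem isUnit_jacobianMatrix {D : ι → Derivation k L L}
    (hD : ∀ j i, D j (algebraMap (MvPolynomial ι k) L (φ i)) = if i = j then 1 else 0) :
    IsUnit (jacobianMatrix L φ) :=
  IsUnit.of_mul_eq_one _ (jacobianMatrix_mul_eq_one hD)

theorem map_jacobianMatrix_mul {D : ι → Derivation k L L}
    (hD : ∀ j i, D j (algebraMap (MvPolynomial ι k) L (φ i)) = if i = j then 1 else 0)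
    {σ : L →+* L} (hσD : ∀ l x, σ (D l x) = D l (σ x)) {N : Matrix ι ι k}
    (hσX : ∀ j, σ (algebraMap (MvPolynomial ι k) L (X j)) =
      ∑ m, N j m • algebraMap (MvPolynomial ι k) L (X m)) :
    (jacobianMatrix L φ).map σ * N.map (algebraMap k L) = jacobianMatrix L φ := by
  set J := jacobianMatrix L φ
  set B : Matrix ι ι L := Matrix.of fun j l => D l (algebraMap (MvPolynomial ι k) L (X j))
  have hJB : J * B = 1 := jacobianMatrix_mul_eq_one hD
  have hσB : B.map σ = N.map (algebraMap k L) * B := by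
    ext j l
    simp [B, hσD, hσX, Matrix.mul_apply, Algebra.smul_def]
  have hσJB : J.map σ * N.map (algebraMap k L) * B = 1 := by
    rw [Matrix.mul_assoc, ← hσB, ← Matrix.map_mul, hJB,
      Matrix.map_one _ (map_zero σ) (map_one σ)]
  exact left_inv_eq_right_inv hσJB (mul_eq_one_comm.mp hJB)

variable [Algebra.FormallyUnramified (MvPolynomial ι k) L]

theorem derivation_ext_of_isUnit_jacobianMatrix (hφ : IsUnit (jacobianMatrix L φ))
    {D E : Derivation k L L}
    (h : ∀ i, D (algebraMap (MvPolynomial ι k) L (φ i)) =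
      E (algebraMap (MvPolynomial ι k) L (φ i))) : D = E := by
  have hX : (fun j => D (algebraMap (MvPolynomial ι k) L (X j))) =
      fun j => E (algebraMap (MvPolynomial ι k) L (X j)) :=
    Matrix.mulVec_injective_of_isUnit hφ <| by
      simp only [jacobianMatrix_mulVec, h]
  have hS : D.compAlgebraMap (MvPolynomial ι k) = E.compAlgebraMap (MvPolynomial ι k) :=
    derivation_ext (congrFun hX)
  exact derivation_ext_of_formallyUnramified (MvPolynomial ι k) (Derivation.congr_fun hS)

theorem algEquiv_derivation_comm (hφ : IsUnit (jacobianMatrix L φ)) {σ : L ≃ₐ[k] L}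
    (hσφ : ∀ i, σ (algebraMap (MvPolynomial ι k) L (φ i)) = algebraMap (MvPolynomial ι k) L (φ i))
    {D : Derivation k L L}
    (hσD : ∀ i, σ (D (algebraMap (MvPolynomial ι k) L (φ i))) =
      D (algebraMap (MvPolynomial ι k) L (φ i))) (x : L) :
    σ (D x) = D (σ x) := by
  have hconj : derivationConj σ D = D := derivation_ext_of_isUnit_jacobianMatrix hφ fun i => by
    rw [derivationConj_apply, σ.symm_apply_eq.mpr (hσφ i).symm, hσD]
  rw [← Derivation.congr_fun hconj (σ x), derivationConj_apply, σ.symm_apply_apply]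

theorem stmt4_general {D : ι → Derivation k L L}
    (hD : ∀ j i, D j (algebraMap (MvPolynomial ι k) L (φ i)) = if i = j then 1 else 0)
    {σ : L ≃ₐ[k] L}
    (hσφ : ∀ i, σ (algebraMap (MvPolynomial ι k) L (φ i)) = algebraMap (MvPolynomial ι k) L (φ i))
    {N : Matrix ι ι k}
    (hσX : ∀ j, σ (algebraMap (MvPolynomial ι k) L (X j)) =
      ∑ m, N j m • algebraMap (MvPolynomial ι k) L (X m)) (l : ι) :
    (matrixLogDeriv (D l) (jacobianMatrix L φ)).map σ =
      matrixLogDeriv (D l) (jacobianMatrix L φ) := by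
  set J := jacobianMatrix L φ
  have hJ : IsUnit J := isUnit_jacobianMatrix hD
  have hσD (m : ι) (x : L) : σ (D m x) = D m (σ x) :=
    algEquiv_derivation_comm hJ hσφ (fun i => by rw [hD]; split_ifs <;> simp) x
  have hσJ : J.map σ * N.map (algebraMap k L) = J :=
    map_jacobianMatrix_mul (σ := (σ : L →+* L)) hD hσD hσX
  have hN : IsUnit (N.map (algebraMap k L)) := by
    rw [← hσJ] at hJ
    exact isUnit_of_mul_isUnit_right hJ
  calc (matrixLogDeriv (D l) J).map σ
      = matrixLogDeriv (D l) (J.map σ) := map_matrixLogDeriv (σ := (σ : L →+* L)) (hσD l) hJ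
    _ = matrixLogDeriv (D l) (J.map σ * N.map (algebraMap k L)) :=
        (matrixLogDeriv_mul_map_algebraMap _ _ hN).symm
    _ = matrixLogDeriv (D l) J := by rw [hσJ]

end Jacobian

theorem toL_gammaAct_X (n : ℕ) (M : GL (Fin n) ℂ) (j : Fin n) :
    toL n (gammaAct n M (X j)) =
      ∑ m, ((M⁻¹ : GL (Fin n) ℂ) : Matrix (Fin n) (Fin n) ℂ) j m • toL n (X m) := by
  simp [gammaAct, Algebra.smul_def, IsScalarTower.algebraMap_apply ℂ (polyS n) (fracL n),
    MvPolynomial.algebraMap_eq]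

theorem stmt4 (n : ℕ) (hn : 1 ≤ n) (G : Subgroup (GL (Fin n) ℂ)) (hGfin : Finite G)
    (φ : Fin n → polyS n) (hφ : AlgebraicIndependent ℂ φ)
    (hinv : ∀ i, ∀ M ∈ G, gammaAct n M (φ i) = φ i)
    -- the extension of the action on `S` to field automorphisms of `L`
    (σ : GL (Fin n) ℂ → (fracL n ≃ₐ[ℂ] fracL n))
    (hσ : ∀ M : GL (Fin n) ℂ, ∀ f : polyS n, σ M (toL n f) = toL n (gammaAct n M f))
    -- the commuting derivations dual to the fundamental invariants
    (D : Fin n → Derivation ℂ (fracL n) (fracL n))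
    (hD : ∀ j i, D j (toL n (φ i)) = if i = j then 1 else 0)
    (A : Fin n → Matrix (Fin n) (Fin n) (fracL n))
    (hA : ∀ ℓ, A ℓ =
      (Matrix.of fun i j => D ℓ (((jacMat φ).map (toL n)) i j)) * ((jacMat φ).map (toL n))⁻¹) :
    ∀ ℓ, ∀ M ∈ G, ∀ i j, σ M (A ℓ i j) = A ℓ i j := by
  intro ℓ M hM i j
  rw [hA ℓ]
  exact congrFun₂ (stmt4_general hD (fun i => by rw [hσ, hinv i M hM])
    (fun j => (hσ M (X j)).trans (toL_gammaAct_X n M j)) ℓ) i j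
end

section
/- (Chevalley–Shephard–Todd) Let n ≥ 1, let S = ℂ[x_1,…,x_n], and let G be a finite subgroup of GL_n(ℂ). Call M ∈ G a reflection if M ≠ 1 and the fixed subspace {v ∈ ℂ^n : Mv = v} has dimension n − 1. Then G is generated by its reflections if and only if there exist polynomials φ_1,…,φ_n ∈ S, each homogeneous (of some positive degree) and together algebraically independent over ℂ, such that the ℂ-subalgebra S^G of G-invariant polynomials equals the ℂ-subalgebra generated by φ_1,…,φ_n. -/
open MvPolynomial

/-- `M` is a (complex) reflection: `M ≠ 1` and its fixed subspace
`{v : ℂⁿ | M v = v}` has dimension `n - 1`. -/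
def IsReflection (n : ℕ) (M : GL (Fin n) ℂ) : Prop :=
  M ≠ 1 ∧ Module.finrank ℂ
    (LinearMap.ker (Matrix.toLin' ((M : Matrix (Fin n) (Fin n) ℂ)) - LinearMap.id)) = n - 1

/-! If `G` is generated by reflections, take a minimal set `f₁, …, fᵣ` of homogeneous generators of
the Hilbert ideal. They generate the algebra of invariants by averaging. For homogeneous invariants
`gᵢ` and a relation `∑ gᵢ hᵢ = 0` in which `g₁` is not a combination of the other `gᵢ`, the
coefficient `h₁` lies in the Hilbert ideal. Applied to the partial derivatives of an algebraic
relation between the `fᵢ` of least weighted degree, this together with Euler's formula contradicts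
minimality, so the `fᵢ` are algebraically independent, and comparing transcendence degrees gives
`r = n`.

Conversely, let `H ≤ G` be generated by the reflections of `G`, so that `S^H = K[ψ₁, …, ψₙ]` by the
first half, and let `S^G = K[φ₁, …, φₙ]`. An element of `G` acting trivially modulo a prime `q` is
`1` or a reflection, hence lies in `H`. So `S^G ⊆ S^H` is unramified in codimension one, and the
Jacobian determinant of the `φᵢ` with respect to the `ψⱼ` has no prime factor in `S`: it is a
nonzero constant. A graded inverse function argument then expresses each `ψⱼ` through the `φᵢ`, so
`S^H = S^G` and `H = G`. -/

namespace ChevalleyShephardTodd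

section Homogeneous

variable {σ ι R : Type*} [CommRing R]

attribute [local instance] MvPolynomial.gradedAlgebra in
lemma homogeneousComponent_mul_of_isHomogeneous {f : MvPolynomial σ R} {d : ℕ}
    (hf : f.IsHomogeneous d) (g : MvPolynomial σ R) (m : ℕ) :
    homogeneousComponent m (f * g) =
      if d ≤ m then f * homogeneousComponent (m - d) g else 0 := by
  have hdecompose (p : MvPolynomial σ R) (i : ℕ) :
      (DirectSum.decompose (homogeneousSubmodule σ R) p i : MvPolynomial σ R) =
        homogeneousComponent i p := decomposition.decompose'_apply p i
  rw [← hdecompose, ← hdecompose, DirectSum.coe_decompose_mul_of_left_mem _ m hf]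

lemma constantCoeff_eq_zero_of_isHomogeneous {f : MvPolynomial σ R} {d : ℕ}
    (hf : f.IsHomogeneous d) (hd : 1 ≤ d) : constantCoeff f = 0 :=
  hf.coeff_eq_zero (by rw [map_zero]; omega)

lemma isHomogeneous_aeval_of_isWeightedHomogeneous {f : ι → MvPolynomial σ R} {w : ι → ℕ}
    (hf : ∀ i, (f i).IsHomogeneous (w i)) {P : MvPolynomial ι R} {m : ℕ}
    (hP : P.IsWeightedHomogeneous w m) : (aeval f P).IsHomogeneous m := by
  rw [aeval_def, eval₂_eq]
  refine IsHomogeneous.sum _ _ _ fun e he => IsHomogeneous.C_mul ?_ _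
  have hprod := IsHomogeneous.prod e.support (fun i => f i ^ e i) (fun i => w i * e i)
    fun i _ => (hf i).pow _
  rwa [← hP (mem_support_iff.mp he), Finsupp.weight_apply, Finsupp.sum,
    Finset.sum_congr rfl fun i _ => (smul_eq_mul (e i) (w i)).trans (mul_comm _ _)]

lemma homogeneousComponent_aeval {f : ι → MvPolynomial σ R} {w : ι → ℕ}
    (hf : ∀ i, (f i).IsHomogeneous (w i)) (P : MvPolynomial ι R) (m : ℕ) :
    homogeneousComponent m (aeval f P) = aeval f (weightedHomogeneousComponent w m P) := by
  induction P using MvPolynomial.induction_on' with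
  | add p q hp hq => simp only [map_add, hp, hq]
  | monomial e r =>
    have he := isWeightedHomogeneous_monomial w e r rfl
    rw [homogeneousComponent_of_mem (isHomogeneous_aeval_of_isWeightedHomogeneous hf he),
      weightedHomogeneousComponent_of_mem he, apply_ite (aeval f), map_zero]

lemma pderiv_aeval [Fintype ι] (f : ι → MvPolynomial σ R) (P : MvPolynomial ι R) (k : σ) :
    pderiv k (aeval f P) = ∑ i, aeval f (pderiv i P) * pderiv k (f i) := by
  classical
  induction P using MvPolynomial.induction_on with
  | C a => simp
  | add p q hp hq => simp only [map_add, hp, hq, add_mul, Finset.sum_add_distrib]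
  | mul_X p i hp =>
    simp only [map_mul, pderiv_mul, hp, aeval_X, map_add, add_mul, Finset.sum_add_distrib,
      pderiv_X, Finset.sum_mul]
    congr 1
    · exact Finset.sum_congr rfl fun _ _ => by ring
    · simp [Pi.single_apply]

end Homogeneous

section Irredundance

variable {σ ι K : Type*} [Field K]

lemma constantCoeff_eq_zero_of_sum_mul_eq_zero [Fintype ι] {g h : ι → MvPolynomial σ K} {e : ι → ℕ}
    (hg : ∀ i, (g i).IsHomogeneous (e i)) (hgh : ∑ i, g i * h i = 0) {j : ι}
    (hj : g j ∉ Ideal.span (g '' {j}ᶜ)) : constantCoeff (h j) = 0 := by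
  classical
  by_contra hc
  have hcomp : ∑ i, homogeneousComponent (e j) (g i * h i) = 0 := by rw [← map_sum, hgh, map_zero]
  rw [Fintype.sum_eq_add_sum_compl j, homogeneousComponent_mul_of_isHomogeneous (hg j),
    if_pos le_rfl, Nat.sub_self, homogeneousComponent_zero] at hcomp
  have hmem : g j * C (constantCoeff (h j)) ∈ Ideal.span (g '' {j}ᶜ) := by
    rw [constantCoeff_eq, eq_neg_of_add_eq_zero_left hcomp]
    refine neg_mem (sum_mem fun i hi => ?_)
    rw [homogeneousComponent_mul_of_isHomogeneous (hg i)]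
    split_ifs
    · exact Ideal.mul_mem_right _ _ (Ideal.subset_span ⟨i, by simpa using hi, rfl⟩)
    · exact zero_mem _
  exact hj ((Ideal.mul_unit_mem_iff_mem _ ((isUnit_iff_ne_zero.mpr hc).map C)).mp hmem)

lemma exists_irredundant_finset {M R : Type*} [Semiring R] [AddCommMonoid M] [Module R M] [Finite ι]
    (g : ι → M) : ∃ s : Finset ι,
      Submodule.span R (Set.range fun i : s => g i) = Submodule.span R (Set.range g) ∧
      ∀ i, g i ∉ Submodule.span R ((fun i : s => g i) '' {i}ᶜ) := by
  classical
  cases nonempty_fintype ι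
  obtain ⟨s, hs⟩ := (Set.toFinite
    {s : Finset ι | Submodule.span R (g '' s) = Submodule.span R (Set.range g)}).exists_minimal
    ⟨Finset.univ, by simp⟩
  refine ⟨s, by rw [← hs.prop, Set.image_eq_range]; rfl, fun ⟨i, his⟩ hi => ?_⟩
  have himage : (fun i : s => g i) '' {⟨i, his⟩}ᶜ = g '' (s.erase i) := by
    aesop
  have hspan : Submodule.span R (g '' (s.erase i)) = Submodule.span R (g '' s) := by
    refine le_antisymm (Submodule.span_mono (Set.image_mono (s.erase_subset i))) ?_
    rw [Submodule.span_le]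
    rintro _ ⟨k, hk, rfl⟩
    by_cases hki : k = i
    · rw [hki]
      exact himage ▸ hi
    · exact Submodule.subset_span ⟨k, Finset.mem_erase.mpr ⟨hki, hk⟩, rfl⟩
  exact s.notMem_erase i (hs.le_of_le (hspan.trans hs.prop) (s.erase_subset i) his)

lemma exists_irredundant_coeff {M R : Type*} [Semiring R] [AddCommMonoid M] [Module R M] [Finite ι]
    (g : ι → M) : ∃ (s : Finset ι) (v : ι → s → R), (∀ i, ∑ a, v i a • g a = g i) ∧
      (∀ a : s, v a a = 1) ∧ ∀ a, g a ∉ Submodule.span R ((fun a : s => g a) '' {a}ᶜ) := by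
  classical
  obtain ⟨s, hs, hirr⟩ := exists_irredundant_finset (R := R) g
  have hmem (i : ι) : g i ∈ Submodule.span R (Set.range fun a : s => g a) :=
    hs ▸ Submodule.subset_span ⟨i, rfl⟩
  choose w hw using fun i => Submodule.mem_span_range_iff_exists_fun R |>.mp (hmem i)
  refine ⟨s, fun i => if hi : i ∈ s then Pi.single ⟨i, hi⟩ 1 else w i, fun i => ?_, by simp, hirr⟩
  by_cases hi : i ∈ s
  · simp [hi, Pi.single_apply]
  · simpa only [hi, dite_false] using hw i

end Irredundance

section LinearForms

variable {σ ι K : Type*} [Field K]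

lemma exists_eq_C_mul_of_dvd {f q : MvPolynomial σ K} (hf : f.totalDegree ≤ 1) (hq : ¬IsUnit q)
    (hqf : q ∣ f) : ∃ c, f = C c * q := by
  obtain ⟨r, rfl⟩ := hqf
  rcases eq_or_ne (q * r) 0 with h0 | h0
  · exact ⟨0, by simp [h0]⟩
  have hq0 : q.totalDegree ≠ 0 := fun hdeg => by
    rw [totalDegree_eq_zero_iff_eq_C] at hdeg
    have hcoeff : coeff 0 q ≠ 0 := fun hc => left_ne_zero_of_mul h0 (by rw [hdeg, hc, C_0])
    exact hq (hdeg ▸ (isUnit_iff_ne_zero.mpr hcoeff).map C)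
  rw [totalDegree_mul_of_isDomain (left_ne_zero_of_mul h0) (right_ne_zero_of_mul h0)] at hf
  exact ⟨coeff 0 r, by
    rw [← totalDegree_eq_zero_iff_eq_C.mp (by omega : r.totalDegree = 0), mul_comm]⟩

variable [Fintype σ]

lemma coeff_single_toMvPolynomial (A : Matrix ι σ K) (i : ι) (k : σ) :
    coeff (Finsupp.single k 1) (A.toMvPolynomial i) = A i k := by
  classical
  simp [Matrix.toMvPolynomial, coeff_sum, coeff_monomial, Finsupp.single_left_inj]

lemma exists_eq_vecMulVec_of_rank_le_one {A : Matrix ι σ K} (hA : A.rank ≤ 1) :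
    ∃ a b, A = Matrix.vecMulVec a b := by
  classical
  obtain ⟨a, ha⟩ := finrank_le_one_iff.mp hA
  choose b hb using fun k => ha ⟨A.mulVecLin (Pi.single k 1), LinearMap.mem_range_self _ _⟩
  refine ⟨a, b, Matrix.ext fun i k => ?_⟩
  have hik : b k * a.1 i = A i k := by
    simpa using congrFun (congrArg Subtype.val (hb k)) i
  rw [Matrix.vecMulVec_apply, ← hik, mul_comm]

lemma rank_le_one_of_forall_dvd_toMvPolynomial {A : Matrix ι σ K}
    {q : MvPolynomial σ K} (hq : ¬IsUnit q) (hqA : ∀ i, q ∣ A.toMvPolynomial i) : A.rank ≤ 1 := by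
  choose c hc using fun i =>
    exists_eq_C_mul_of_dvd (A.toMvPolynomial_totalDegree_le i) hq (hqA i)
  have hA : A = Matrix.vecMulVec c fun k => coeff (Finsupp.single k 1) q := by
    ext i k
    rw [← coeff_single_toMvPolynomial A, hc, coeff_C_mul, Matrix.vecMulVec_apply]
  exact hA ▸ Matrix.rank_vecMulVec_le _ _

end LinearForms

section Action

variable {σ K : Type*} [Field K] [Fintype σ] [DecidableEq σ]

/-- The action of `GL σ K` on polynomial functions on `σ → K`, given by `(M • f) x = f (M⁻¹ x)`. -/
noncomputable instance : MulSemiringAction (GL σ K) (MvPolynomial σ K) where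
  smul M f := aeval ((M⁻¹ : GL σ K) : Matrix σ σ K).toMvPolynomial f
  one_smul f := by
    change aeval ((1⁻¹ : GL σ K) : Matrix σ σ K).toMvPolynomial f = f
    simp
  mul_smul M N f := by
    change bind₁ (((M * N)⁻¹ : GL σ K) : Matrix σ σ K).toMvPolynomial f =
      bind₁ ((M⁻¹ : GL σ K) : Matrix σ σ K).toMvPolynomial
        (bind₁ ((N⁻¹ : GL σ K) : Matrix σ σ K).toMvPolynomial f)
    rw [bind₁_bind₁, mul_inv_rev, Units.val_mul]
    simp only [← Matrix.toMvPolynomial_mul]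
  smul_zero _ := map_zero (aeval _)
  smul_add _ := map_add (aeval _)
  smul_one _ := map_one (aeval _)
  smul_mul _ := map_mul (aeval _)

lemma smul_eq_aeval (M : GL σ K) (f : MvPolynomial σ K) :
    M • f = aeval ((M⁻¹ : GL σ K) : Matrix σ σ K).toMvPolynomial f := rfl

instance : SMulCommClass (GL σ K) K (MvPolynomial σ K) where
  smul_comm M c f := map_smul (aeval ((M⁻¹ : GL σ K) : Matrix σ σ K).toMvPolynomial) c f

lemma smul_X (M : GL σ K) (i : σ) :
    M • (X i : MvPolynomial σ K) = ((M⁻¹ : GL σ K) : Matrix σ σ K).toMvPolynomial i :=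
  aeval_X _ i

lemma smul_X_sub_X (M : GL σ K) (i : σ) :
    M • (X i : MvPolynomial σ K) - X i =
      (((M⁻¹ : GL σ K) : Matrix σ σ K) - 1).toMvPolynomial i := by
  rw [smul_X, sub_eq_iff_eq_add, ← Matrix.toMvPolynomial_one (R := K), ← Pi.add_apply,
    ← Matrix.toMvPolynomial_add, sub_add_cancel]

instance : FaithfulSMul (GL σ K) (MvPolynomial σ K) where
  eq_of_smul_eq_smul {M N} h := by
    refine inv_injective (Units.ext (Matrix.ext fun i k => ?_))
    rw [← coeff_single_toMvPolynomial (M⁻¹ : GL σ K).val,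
      ← coeff_single_toMvPolynomial (N⁻¹ : GL σ K).val, ← smul_X, ← smul_X, h]

lemma isHomogeneous_smul (M : GL σ K) {f : MvPolynomial σ K} {d : ℕ} (hf : f.IsHomogeneous d) :
    (M • f).IsHomogeneous d := by
  simpa [smul_eq_aeval] using
    hf.aeval _ (((M⁻¹ : GL σ K) : Matrix σ σ K).toMvPolynomial_isHomogeneous)

lemma homogeneousComponent_smul (M : GL σ K) (d : ℕ) (f : MvPolynomial σ K) :
    homogeneousComponent d (M • f) = M • homogeneousComponent d f :=
  homogeneousComponent_aeval (w := 1) (Matrix.toMvPolynomial_isHomogeneous _) f d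

lemma totalDegree_smul_le (M : GL σ K) (f : MvPolynomial σ K) :
    (M • f).totalDegree ≤ f.totalDegree := by
  conv_lhs => rw [← sum_homogeneousComponent f, Finset.smul_sum]
  refine (totalDegree_finsetSum _ _).trans (Finset.sup_le fun d hd => ?_)
  exact (isHomogeneous_smul M (homogeneousComponent_isHomogeneous d f)).totalDegree_le.trans
    (Finset.mem_range_succ_iff.mp hd)

end Action

section PseudoReflection

variable {σ K : Type*} [Field K] [Fintype σ] [DecidableEq σ]

/-- An invertible matrix is a pseudo-reflection if it is not the identity and fixes a hyperplane
pointwise; both conditions together say that `M - 1` has rank one. -/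
def IsPseudoReflection (M : GL σ K) : Prop := ((M : Matrix σ σ K) - 1).rank = 1

lemma IsPseudoReflection.inv {M : GL σ K} (hM : IsPseudoReflection M) :
    IsPseudoReflection M⁻¹ := by
  have hinv : ((M⁻¹ : GL σ K) : Matrix σ σ K) - 1 =
      -((M⁻¹ : GL σ K) : Matrix σ σ K) * ((M : Matrix σ σ K) - 1) := by
    rw [neg_mul, mul_sub, mul_one, Units.inv_mul, neg_sub]
  rwa [IsPseudoReflection, hinv, Matrix.rank_mul_eq_right_of_isUnit_det _ _
    ((Matrix.isUnit_iff_isUnit_det _).mp M⁻¹.isUnit.neg)]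

lemma isPseudoReflection_iff_rank_le_one {M : GL σ K} :
    IsPseudoReflection M ↔ M ≠ 1 ∧ ((M : Matrix σ σ K) - 1).rank ≤ 1 := by
  have hrank : ((M : Matrix σ σ K) - 1).rank = 0 ↔ M = 1 := by
    rw [Matrix.rank, Submodule.finrank_eq_zero, LinearMap.range_eq_bot, ← Matrix.toLin'_apply',
      LinearEquiv.map_eq_zero_iff, sub_eq_zero, Units.val_eq_one]
  rw [IsPseudoReflection, ne_eq, ← hrank]
  omega

lemma IsPseudoReflection.exists_linear_dvd_sub_smul {M : GL σ K} (hM : IsPseudoReflection M) :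
    ∃ l : MvPolynomial σ K, l.IsHomogeneous 1 ∧ l ≠ 0 ∧ ∀ f, l ∣ f - M • f := by
  obtain ⟨a, b, hab⟩ := exists_eq_vecMulVec_of_rank_le_one hM.inv.le
  let l : MvPolynomial σ K := (Matrix.replicateRow Unit b).toMvPolynomial ()
  have hMX (i : σ) : M • (X i : MvPolynomial σ K) - X i = C (a i) * l := by
    rw [smul_X_sub_X, hab]
    simp [l, Matrix.toMvPolynomial, Matrix.vecMulVec_apply, Finset.mul_sum, C_mul_monomial]
  have hmod : (Ideal.Quotient.mkₐ K (Ideal.span {l})).comp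
      (aeval ((M⁻¹ : GL σ K) : Matrix σ σ K).toMvPolynomial) =
        Ideal.Quotient.mkₐ K (Ideal.span {l}) := by
    refine algHom_ext fun i => Ideal.Quotient.eq.mpr (Ideal.mem_span_singleton.mpr ?_)
    exact ⟨C (a i), (hMX i).trans (mul_comm _ _)⟩
  refine ⟨l, Matrix.toMvPolynomial_isHomogeneous _ _, ?_, fun f => ?_⟩
  · intro hl
    have hb : b = 0 := by
      ext k
      have hk := coeff_single_toMvPolynomial (Matrix.replicateRow Unit b) () k
      exact hk.symm.trans ((congrArg _ hl).trans (coeff_zero _))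
    have hrank := hM.inv
    rw [IsPseudoReflection, hab, hb, Matrix.vecMulVec_zero, Matrix.rank_zero] at hrank
    exact zero_ne_one hrank
  · exact Ideal.mem_span_singleton.mp
      (Ideal.Quotient.eq.mp (DFunLike.congr_fun hmod f).symm)

lemma eq_one_or_isPseudoReflection_of_dvd_smul_sub {M : GL σ K} {q : MvPolynomial σ K}
    (hq : ¬IsUnit q) (hqM : ∀ f : MvPolynomial σ K, q ∣ M • f - f) :
    M = 1 ∨ IsPseudoReflection M := by
  have hrank := rank_le_one_of_forall_dvd_toMvPolynomial hq fun i => smul_X_sub_X M i ▸ hqM (X i)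
  rw [or_iff_not_imp_left]
  intro hM
  exact inv_inv M ▸ (isPseudoReflection_iff_rank_le_one.mpr ⟨inv_ne_one.mpr hM, hrank⟩).inv

end PseudoReflection

section Reynolds

variable (K G : Type*) {A : Type*} [Field K] [CommRing A] [Algebra K A] [Group G] [Fintype G]
  [MulSemiringAction G A] [SMulCommClass G K A]

/-- The Reynolds operator of a finite group: the average `|G|⁻¹ ∑ g, g • f` over an orbit. -/
noncomputable def reynolds : A →ₗ[K] A :=
  (Fintype.card G : K)⁻¹ • ∑ g : G, DistribSMul.toLinearMap K A g

lemma reynolds_apply (f : A) : reynolds K G f = (Fintype.card G : K)⁻¹ • ∑ g : G, g • f := by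
  simp [reynolds]

lemma reynolds_mem_fixedPoints (f : A) : reynolds K G f ∈ FixedPoints.subalgebra K A G := by
  intro g
  rw [reynolds_apply, smul_comm, Finset.smul_sum]
  simp only [smul_smul]
  rw [Fintype.sum_equiv (Equiv.mulLeft g) (fun h => (g * h) • f) (· • f) fun _ => rfl]

lemma reynolds_mul_of_mem_fixedPoints {f : A} (hf : f ∈ FixedPoints.subalgebra K A G) (h : A) :
    reynolds K G (f * h) = f * reynolds K G h := by
  rw [reynolds_apply, reynolds_apply, mul_smul_comm, Finset.mul_sum]
  exact congrArg _ (Finset.sum_congr rfl fun g _ => by rw [smul_mul', hf g])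

variable [CharZero K]

lemma sub_reynolds_mem {I : Ideal A} {f : A} (hf : ∀ g : G, f - g • f ∈ I) :
    f - reynolds K G f ∈ I := by
  have hcard : (Fintype.card G : K) ≠ 0 := Nat.cast_ne_zero.mpr Fintype.card_ne_zero
  have hsum : f - reynolds K G f = (Fintype.card G : K)⁻¹ • ∑ g : G, (f - g • f) := by
    rw [reynolds_apply, Finset.sum_sub_distrib, smul_sub, Finset.sum_const, Finset.card_univ,
      ← Nat.cast_smul_eq_nsmul K, inv_smul_smul₀ hcard]
  rw [hsum]
  exact Submodule.smul_of_tower_mem I _ (sum_mem fun g _ => hf g)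

lemma reynolds_eq_self {f : A} (hf : f ∈ FixedPoints.subalgebra K A G) : reynolds K G f = f := by
  have h := sub_reynolds_mem K G (I := ⊥) (f := f) fun g => by rw [hf g, sub_self]; exact zero_mem _
  exact (sub_eq_zero.mp h).symm

end Reynolds

lemma sub_smul_mem_of_mem_closure {Γ A S : Type*} [Group Γ] [AddCommGroup A] [DistribMulAction Γ A]
    [SetLike S A] [AddSubgroupClass S A] {I : S} {s : Set Γ} {f : A}
    (hI : ∀ g ∈ Subgroup.closure s, ∀ a ∈ I, g • a ∈ I) (hs : ∀ g ∈ s, f - g • f ∈ I) {g : Γ}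
    (hg : g ∈ Subgroup.closure s) : f - g • f ∈ I := by
  induction hg using Subgroup.closure_induction with
  | mem g hg => exact hs g hg
  | one => rw [one_smul, sub_self]; exact zero_mem I
  | mul g h hg _ hgf hhf =>
    simpa [smul_sub, mul_smul] using add_mem hgf (hI g hg _ hhf)
  | inv g hg hgf =>
    simpa [smul_sub] using neg_mem (hI g⁻¹ (inv_mem hg) _ hgf)

section HilbertIdeal

variable {σ K : Type*} [Field K] [Fintype σ] [DecidableEq σ] {G : Subgroup (GL σ K)}

variable (G) in
/-- The algebra of polynomials invariant under a group of matrices. -/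
noncomputable abbrev invariants : Subalgebra K (MvPolynomial σ K) :=
  FixedPoints.subalgebra K (MvPolynomial σ K) G

lemma mem_invariants {f : MvPolynomial σ K} : f ∈ invariants G ↔ ∀ M ∈ G, M • f = f :=
  Subtype.forall

lemma homogeneousComponent_mem_invariants {f : MvPolynomial σ K} (hf : f ∈ invariants G) (d : ℕ) :
    homogeneousComponent d f ∈ invariants G :=
  mem_invariants.mpr fun M hM => by rw [← homogeneousComponent_smul, mem_invariants.mp hf M hM]

variable (G) in
/-- The Hilbert ideal: the ideal of the polynomial ring generated by the homogeneous invariants of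
positive degree. -/
noncomputable def hilbertIdeal : Ideal (MvPolynomial σ K) :=
  Ideal.span {f | f ∈ invariants G ∧ ∃ d, 1 ≤ d ∧ f.IsHomogeneous d}

lemma smul_mem_hilbertIdeal {M : GL σ K} (hM : M ∈ G) {f : MvPolynomial σ K}
    (hf : f ∈ hilbertIdeal G) : M • f ∈ hilbertIdeal G := by
  have hle : hilbertIdeal G ≤ (hilbertIdeal G).comap (MulSemiringAction.toRingHom _ _ M) := by
    refine Ideal.span_le.mpr fun g hg => ?_
    rw [SetLike.mem_coe, Ideal.mem_comap, MulSemiringAction.toRingHom_apply,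
      mem_invariants.mp hg.1 M hM]
    exact Ideal.subset_span hg
  exact hle hf

lemma constantCoeff_eq_zero_of_mem_hilbertIdeal {f : MvPolynomial σ K} (hf : f ∈ hilbertIdeal G) :
    constantCoeff f = 0 := by
  have hle : hilbertIdeal G ≤ RingHom.ker constantCoeff :=
    Ideal.span_le.mpr fun _ ⟨_, _, hd, hg⟩ => constantCoeff_eq_zero_of_isHomogeneous hg hd
  exact hle hf

lemma mem_hilbertIdeal_of_mem_invariants {f : MvPolynomial σ K} (hf : f ∈ invariants G)
    (hf0 : constantCoeff f = 0) : f ∈ hilbertIdeal G := by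
  rw [← sum_homogeneousComponent f, Finset.sum_range_succ', homogeneousComponent_zero,
    ← constantCoeff_eq, hf0, C_0, add_zero]
  exact sum_mem fun d _ => Ideal.subset_span ⟨homogeneousComponent_mem_invariants hf _, d + 1,
    d.succ_pos, homogeneousComponent_isHomogeneous _ _⟩

lemma mem_hilbertIdeal_of_forall_sub_smul_mem [CharZero K] [Finite G] {f : MvPolynomial σ K}
    (hf0 : constantCoeff f = 0) (hf : ∀ M ∈ G, f - M • f ∈ hilbertIdeal G) :
    f ∈ hilbertIdeal G := by
  cases nonempty_fintype G
  have hsub : f - reynolds K G f ∈ hilbertIdeal G := sub_reynolds_mem K G fun M => hf M M.2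
  have hreynolds : constantCoeff (reynolds K G f) = 0 := by
    simpa [hf0] using constantCoeff_eq_zero_of_mem_hilbertIdeal hsub
  exact (Submodule.sub_mem_iff_left _
    (mem_hilbertIdeal_of_mem_invariants (reynolds_mem_fixedPoints K G f) hreynolds)).mp hsub

-- For a reflection `s` with linear form `l`, dividing the relation minus its `s`-translate by `l`
-- produces a relation with coefficients `(h i - s • h i) / l` of smaller degree.
lemma mem_hilbertIdeal_of_sum_mul_eq_zero [CharZero K] [Finite G]
    (hG : Subgroup.closure {M | M ∈ G ∧ IsPseudoReflection M} = G) {ι : Type*} [Fintype ι]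
    {g : ι → MvPolynomial σ K} {e : ι → ℕ} (hg : ∀ i, (g i).IsHomogeneous (e i))
    (hinv : ∀ i, g i ∈ invariants G) {j : ι} (hj : g j ∉ Ideal.span (g '' {j}ᶜ))
    {h : ι → MvPolynomial σ K} (hgh : ∑ i, g i * h i = 0) : h j ∈ hilbertIdeal G := by
  induction hN : (h j).totalDegree using Nat.strong_induction_on generalizing h with
  | _ N ih =>
  have hreflection : ∀ s ∈ {M | M ∈ G ∧ IsPseudoReflection M},
      h j - s • h j ∈ hilbertIdeal G := by
    rintro s ⟨hsG, hs⟩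
    obtain ⟨l, hl, hl0, hdvd⟩ := hs.exists_linear_dvd_sub_smul
    choose h' hh' using fun i => hdvd (h i)
    rcases eq_or_ne (h' j) 0 with h0 | h0
    · simp [hh', h0]
    rw [hh']
    refine Ideal.mul_mem_left _ _ (ih (h' j).totalDegree ?_ ?_ rfl)
    · have hdeg := (totalDegree_sub (h j) (s • h j)).trans (max_le le_rfl (totalDegree_smul_le _ _))
      rw [hh' j, totalDegree_mul_of_isDomain hl0 h0, hl.totalDegree hl0] at hdeg
      omega
    · have hrel (i : ι) : l * (g i * h' i) = g i * h i - s • (g i * h i) := by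
        rw [smul_mul', mem_invariants.mp (hinv i) s hsG, ← mul_sub, hh']
        ring
      refine (mul_eq_zero.mp ?_).resolve_left hl0
      rw [Finset.mul_sum, Finset.sum_congr rfl fun i _ => hrel i, Finset.sum_sub_distrib,
        ← Finset.smul_sum, hgh, smul_zero, sub_zero]
  refine mem_hilbertIdeal_of_forall_sub_smul_mem
    (constantCoeff_eq_zero_of_sum_mul_eq_zero hg hgh hj) fun M hM => ?_
  rw [← hG] at hM
  exact sub_smul_mem_of_mem_closure (fun N hN _ => smul_mem_hilbertIdeal (hG ▸ hN)) hreflection hM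

lemma invariants_eq_adjoin_of_span_eq_hilbertIdeal [CharZero K] [Finite G] {ι : Type*} [Finite ι]
    {f : ι → MvPolynomial σ K} {d : ι → ℕ} (hd : ∀ i, 1 ≤ d i) (hf : ∀ i, (f i).IsHomogeneous (d i))
    (hinv : ∀ i, f i ∈ invariants G) (hspan : Ideal.span (Set.range f) = hilbertIdeal G) :
    invariants G = Algebra.adjoin K (Set.range f) := by
  cases nonempty_fintype G
  cases nonempty_fintype ι
  refine le_antisymm (fun F hF => ?_) (Algebra.adjoin_le (Set.range_subset_iff.mpr hinv))
  suffices hhom : ∀ m, homogeneousComponent m F ∈ Algebra.adjoin K (Set.range f) by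
    rw [← sum_homogeneousComponent F]
    exact sum_mem fun m _ => hhom m
  intro m
  induction m using Nat.strong_induction_on generalizing F with
  | _ m ih =>
  rcases m.eq_zero_or_pos with rfl | hm
  · rw [homogeneousComponent_zero]
    exact Subalgebra.algebraMap_mem _ _
  have hFm := homogeneousComponent_mem_invariants hF m
  have hmem : homogeneousComponent m F ∈ Ideal.span (Set.range f) :=
    hspan ▸ Ideal.subset_span ⟨hFm, m, hm, homogeneousComponent_isHomogeneous m F⟩
  obtain ⟨w, hw⟩ := Ideal.mem_span_range_iff_exists_fun.mp hmem
  have havg : homogeneousComponent m F = ∑ i, f i * reynolds K G (w i) := by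
    rw [← reynolds_eq_self K G hFm, ← hw, map_sum]
    exact Finset.sum_congr rfl fun i _ => by
      rw [mul_comm, reynolds_mul_of_mem_fixedPoints K G (hinv i)]
  rw [← homogeneousComponent_eq_self (homogeneousComponent_isHomogeneous m F), havg, map_sum]
  refine sum_mem fun i _ => ?_
  rw [homogeneousComponent_mul_of_isHomogeneous (hf i)]
  split_ifs with him
  · exact mul_mem (Algebra.subset_adjoin ⟨i, rfl⟩)
      (ih (m - d i) (by have := hd i; omega) _ (reynolds_mem_fixedPoints K G _))
  · exact zero_mem _

end HilbertIdeal

section AlgebraicRelations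

variable {σ ι K : Type*} [Field K]

lemma isWeightedHomogeneous_pderiv_sub {w : ι → ℕ} {P : MvPolynomial ι K} {m : ℕ}
    (hP : P.IsWeightedHomogeneous w m) (i : ι) :
    (pderiv i P).IsWeightedHomogeneous w (m - w i) := by
  by_cases hi : w i ≤ m
  · exact hP.pderiv (Nat.sub_add_cancel hi)
  · intro e he
    rw [coeff_pderiv] at he
    have hweight := hP (left_ne_zero_of_mul he)
    rw [map_add, Finsupp.weight_single, one_smul] at hweight
    omega

lemma exists_isWeightedHomogeneous_of_not_algebraicIndependent {f : ι → MvPolynomial σ K}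
    {w : ι → ℕ} (hf : ∀ i, (f i).IsHomogeneous (w i)) (hdep : ¬AlgebraicIndependent K f) :
    ∃ m, ∃ P : MvPolynomial ι K, P ≠ 0 ∧ P.IsWeightedHomogeneous w m ∧ aeval f P = 0 := by
  rw [algebraicIndependent_iff] at hdep
  push Not at hdep
  obtain ⟨P, hPf, hP⟩ := hdep
  obtain ⟨m, hm⟩ : ∃ m, weightedHomogeneousComponent w m P ≠ 0 := by
    by_contra! hzero
    rw [← sum_weightedHomogeneousComponent w P] at hP
    exact hP (finsum_eq_zero_of_forall_eq_zero hzero)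
  exact ⟨m, _, hm, weightedHomogeneousComponent_isWeightedHomogeneous m P,
    by rw [← homogeneousComponent_aeval hf, hPf, map_zero]⟩

variable [CharZero K]

lemma exists_aeval_pderiv_ne_zero_of_not_algebraicIndependent [Finite ι]
    {f : ι → MvPolynomial σ K} {w : ι → ℕ} (hw : ∀ i, 1 ≤ w i)
    (hf : ∀ i, (f i).IsHomogeneous (w i)) (hdep : ¬AlgebraicIndependent K f) :
    ∃ m, ∃ P : MvPolynomial ι K, P.IsWeightedHomogeneous w m ∧ aeval f P = 0 ∧
      ∃ i, aeval f (pderiv i P) ≠ 0 := by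
  classical
  cases nonempty_fintype ι
  have hex := exists_isWeightedHomogeneous_of_not_algebraicIndependent hf hdep
  obtain ⟨P, hP0, hP, hPf⟩ := Nat.find_spec hex
  refine ⟨_, P, hP, hPf, ?_⟩
  by_contra! hzero
  have hm : Nat.find hex ≠ 0 := by
    intro hm
    have hPC := weightedHomogeneousComponent_zero P fun i => Nat.one_le_iff_ne_zero.mp (hw i)
    rw [weightedHomogeneousComponent_eq_self (hm ▸ hP)] at hPC
    rw [hPC, aeval_C] at hPf
    exact hP0 (by rw [hPC, (map_eq_zero (algebraMap K (MvPolynomial σ K))).mp hPf, C_0])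
  have hpderiv (i : ι) : pderiv i P = 0 := by
    by_contra hi
    exact Nat.find_min hex (Nat.sub_lt (Nat.pos_of_ne_zero hm) (hw i))
      ⟨_, hi, isWeightedHomogeneous_pderiv_sub hP i, hzero i⟩
  have heuler := hP.sum_weight_X_mul_pderiv
  simp only [hpderiv, mul_zero, smul_zero, Finset.sum_const_zero] at heuler
  exact (smul_ne_zero hm hP0) heuler.symm

lemma constantCoeff_eq_zero_of_sum_mul_pderiv_mem [Finite σ] [Fintype ι]
    {f : ι → MvPolynomial σ K} {d : ι → ℕ} (hd : ∀ i, 1 ≤ d i) (hf : ∀ i, (f i).IsHomogeneous (d i))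
    {c : ι → MvPolynomial σ K}
    (hc : ∀ k, ∑ i, c i * pderiv k (f i) ∈ Ideal.span (Set.range f)) {j : ι}
    (hj : f j ∉ Ideal.span (f '' {j}ᶜ)) : constantCoeff (c j) = 0 := by
  cases nonempty_fintype σ
  choose w hw using fun k => Ideal.mem_span_range_iff_exists_fun.mp (hc k)
  have heuler : ∑ k, X k * ∑ i, c i * pderiv k (f i) = ∑ i, f i * (d i • c i) := by
    simp only [Finset.mul_sum]
    rw [Finset.sum_comm]
    refine Finset.sum_congr rfl fun i _ => ?_
    rw [mul_smul_comm, ← smul_mul_assoc, ← (hf i).sum_X_mul_pderiv, Finset.sum_mul]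
    exact Finset.sum_congr rfl fun k _ => by ring
  have hrel : ∑ i, f i * (d i • c i - ∑ k, X k * w k i) = 0 := by
    simp only [mul_sub, Finset.sum_sub_distrib]
    rw [← heuler, sub_eq_zero]
    simp only [← hw, Finset.mul_sum]
    rw [Finset.sum_comm]
    exact Finset.sum_congr rfl fun i _ => Finset.sum_congr rfl fun k _ => by ring
  have hcoeff := constantCoeff_eq_zero_of_sum_mul_eq_zero hf hrel hj
  simpa [Nat.one_le_iff_ne_zero.mp (hd j)] using hcoeff

end AlgebraicRelations

section Chevalley

variable {σ K : Type*} [Field K] [Fintype σ] [DecidableEq σ] {G : Subgroup (GL σ K)} [Finite G]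

lemma algebraicIndependent_of_irredundant [CharZero K]
    (hG : Subgroup.closure {M | M ∈ G ∧ IsPseudoReflection M} = G) {ι : Type*} [Finite ι]
    {f : ι → MvPolynomial σ K} {d : ι → ℕ} (hd : ∀ i, 1 ≤ d i) (hf : ∀ i, (f i).IsHomogeneous (d i))
    (hinv : ∀ i, f i ∈ invariants G) (hspan : Ideal.span (Set.range f) = hilbertIdeal G)
    (hirr : ∀ i, f i ∉ Ideal.span (f '' {i}ᶜ)) : AlgebraicIndependent K f := by
  classical
  cases nonempty_fintype ι
  by_contra hdep
  obtain ⟨m, P, hP, hPf, i₀, hi₀⟩ :=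
    exists_aeval_pderiv_ne_zero_of_not_algebraicIndependent hd hf hdep
  let g (i : ι) : MvPolynomial σ K := aeval f (pderiv i P)
  obtain ⟨s, v, hv, hv1, hirrs⟩ := exists_irredundant_coeff (R := MvPolynomial σ K) g
  have hg (a : s) : (g a).IsHomogeneous (m - d a) :=
    isHomogeneous_aeval_of_isWeightedHomogeneous hf (isWeightedHomogeneous_pderiv_sub hP a)
  have hginv (a : s) : g a ∈ invariants G :=
    Algebra.adjoin_le (Set.range_subset_iff.mpr hinv) <|
      (Algebra.adjoin_range_eq_range_aeval K f).ge ⟨pderiv a.1 P, rfl⟩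
  obtain ⟨j⟩ : Nonempty s := by
    by_contra hempty
    rw [not_nonempty_iff] at hempty
    exact hi₀ ((hv i₀).symm.trans (Fintype.sum_empty _))
  have hrel (k : σ) : ∑ a : s, g a * ∑ i, v i a * pderiv k (f i) = 0 := by
    calc ∑ a : s, g a * ∑ i, v i a * pderiv k (f i)
        = ∑ i, (∑ a, v i a • g a) * pderiv k (f i) := by
          simp only [Finset.mul_sum, Finset.sum_mul, smul_eq_mul]
          rw [Finset.sum_comm]
          exact Finset.sum_congr rfl fun i _ => Finset.sum_congr rfl fun a _ => by ring
      _ = pderiv k (aeval f P) := by simp only [hv, pderiv_aeval, g]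
      _ = 0 := by rw [hPf, map_zero]
  have hvj : constantCoeff (v j j) = 0 :=
    constantCoeff_eq_zero_of_sum_mul_pderiv_mem (c := fun i => v i j) hd hf (fun k => hspan ▸
      mem_hilbertIdeal_of_sum_mul_eq_zero hG hg hginv (hirrs j) (hrel k)) (hirr j)
  rw [hv1, map_one] at hvj
  exact one_ne_zero hvj

lemma nonempty_equiv_of_invariants_eq_adjoin {ι : Type*} {f : ι → MvPolynomial σ K}
    (hf : AlgebraicIndependent K f) (hgen : invariants G = Algebra.adjoin K (Set.range f)) :
    Nonempty (σ ≃ ι) := by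
  have : Algebra.IsInvariant (invariants G) (MvPolynomial σ K) G := ⟨fun b hb => ⟨⟨b, hb⟩, rfl⟩⟩
  have hbasis : IsTranscendenceBasis K f := by
    rw [hf.isTranscendenceBasis_iff_isAlgebraic, ← hgen]
    exact (Algebra.IsInvariant.isIntegral (invariants G) (MvPolynomial σ K) G).isAlgebraic
  exact Cardinal.lift_mk_eq'.mp ((IsTranscendenceBasis.mvPolynomial σ K).lift_cardinalMk_eq hbasis)

theorem exists_generators_of_closure_eq [CharZero K]
    (hG : Subgroup.closure {M | M ∈ G ∧ IsPseudoReflection M} = G) :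
    ∃ (φ : σ → MvPolynomial σ K) (d : σ → ℕ), (∀ i, 1 ≤ d i) ∧ (∀ i, (φ i).IsHomogeneous (d i)) ∧
      AlgebraicIndependent K φ ∧ invariants G = Algebra.adjoin K (Set.range φ) := by
  obtain ⟨t, ht, hspan⟩ := (Submodule.fg_span_iff_fg_span_finset_subset _).mp
    (IsNoetherian.noetherian (hilbertIdeal G))
  obtain ⟨s, hs, hirr⟩ :=
    exists_irredundant_finset (R := MvPolynomial σ K) ((↑) : t → MvPolynomial σ K)
  choose hinv d hd hf using fun i : s => ht i.1.2
  have hspan : Ideal.span (Set.range fun i : s => i.1.1) = hilbertIdeal G :=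
    hs.trans (by rw [Subtype.range_coe]; exact hspan.symm)
  have hindep := algebraicIndependent_of_irredundant hG hd hf hinv hspan hirr
  have hgen := invariants_eq_adjoin_of_span_eq_hilbertIdeal hd hf hinv hspan
  obtain ⟨e⟩ := nonempty_equiv_of_invariants_eq_adjoin hindep hgen
  exact ⟨fun i => (e i).1.1, d ∘ e, fun i => hd (e i), fun i => hf (e i), hindep.comp _ e.injective,
    by rw [hgen, ← e.surjective.range_comp]; rfl⟩

end Chevalley

section Leibniz

lemma map_eval_of_leibniz {R L : Type*} [CommRing R] [CommRing L] {χ : R →+* L} {δ : R →+ L}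
    (hδ : ∀ a b, δ (a * b) = χ a * δ b + χ b * δ a) {p : Polynomial R}
    (hp : ∀ n, δ (p.coeff n) = 0) (c : R) :
    δ (p.eval c) = χ (p.derivative.eval c) * δ c := by
  let _ : Algebra R L := χ.toAlgebra
  let D : Derivation ℤ R L := .mk' δ.toIntLinearMap hδ
  change D (p.eval c) = p.derivative.eval c • D c
  rw [Polynomial.eval_eq_sum, Polynomial.derivative_eval, Polynomial.sum, Polynomial.sum, map_sum,
    Finset.sum_smul]
  refine Finset.sum_congr rfl fun n _ => ?_
  rw [D.leibniz, D.leibniz_pow, show D (p.coeff n) = 0 from hp n, smul_zero, add_zero,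
    ← Nat.cast_smul_eq_nsmul R, smul_smul, smul_smul, mul_assoc]

lemma map_eval_derivative_prodXSubSMul_ne_zero {G B L : Type*} [Group G] [Fintype G] [CommRing B]
    [MulSemiringAction G B] [CommRing L] [IsDomain L] {v : B →+* L} {b : B}
    (hb : ∀ g : G, v (g • b) = v b → g • b = b) :
    v ((prodXSubSMul G B b).derivative.eval b) ≠ 0 := by
  classical
  rw [prodXSubSMul, ← Finset.mul_prod_erase _ _ (Finset.mem_univ ((1 : G) : G ⧸ _)),
    Polynomial.derivative_mul]
  simp only [Polynomial.derivative_X, Polynomial.derivative_C,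
    MulAction.ofQuotientStabilizer_mk, one_smul, sub_zero, one_mul, Polynomial.eval_add,
    Polynomial.eval_mul, Polynomial.eval_sub, Polynomial.eval_X, Polynomial.eval_C, sub_self,
    zero_mul, add_zero, Polynomial.eval_prod, map_prod, map_sub]
  rw [Finset.prod_ne_zero_iff]
  intro q hq hzero
  induction q using QuotientGroup.induction_on with
  | H g =>
    rw [MulAction.ofQuotientStabilizer_mk, sub_eq_zero] at hzero
    have hg := MulAction.mem_stabilizer_iff.mpr (hb g hzero.symm)
    exact Finset.ne_of_mem_erase hq (QuotientGroup.eq.mpr (by simpa using inv_mem hg))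

end Leibniz

section Unramified

variable {K R B L G : Type*} [Field K] [Infinite K] [CommRing R] [CommRing B] [CommRing L]
  [IsDomain L] [Algebra K R] [Algebra K B] [Algebra K L] [Group G] [Finite G]
  [MulSemiringAction G B] [SMulCommClass G K B]

lemma leibniz_apply_eq_zero_of_separated {π : R →+* B} (hπ : Function.Injective π)
    (hπG : ∀ b, (∀ g : G, g • b = b) → b ∈ Set.range π) {v : B →+* L} {δ : R →+ L}
    (hδ : ∀ a b, δ (a * b) = v (π a) * δ b + v (π b) * δ a)
    (hδG : ∀ a, (∀ g : G, g • π a = π a) → δ a = 0)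
    {c : R} (hc : ∀ g : G, v (g • π c) = v (π c) → g • π c = π c) : δ c = 0 := by
  cases nonempty_fintype G
  obtain ⟨p, hp⟩ := (Polynomial.mem_lifts _).mp <| (Polynomial.lifts_iff_coeff_lifts _).mpr fun n =>
    hπG _ fun g => prodXSubSMul.coeff G B (π c) g n
  have hroot : p.eval c = 0 :=
    hπ (by rw [← Polynomial.eval_map_apply, hp, prodXSubSMul.eval, map_zero])
  have hcoeff (n : ℕ) : δ (p.coeff n) = 0 := hδG _ fun g => by
    rw [← Polynomial.coeff_map, hp, prodXSubSMul.coeff]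
  have hderiv : v (π (p.derivative.eval c)) * δ c = 0 := by
    rw [← RingHom.comp_apply, ← map_eval_of_leibniz hδ hcoeff, hroot, map_zero]
  refine (mul_eq_zero.mp hderiv).resolve_left ?_
  rw [← Polynomial.eval_map_apply, ← Polynomial.derivative_map, hp]
  exact map_eval_derivative_prodXSubSMul_ne_zero hc

-- Off finitely many proper subspaces, `v` separates `π c` from its other conjugates, which forces
-- `δ c = 0`; so `R` is the union of these subspaces and `ker δ`.
lemma leibniz_eq_zero_of_unramified {π : R →ₐ[K] B} (hπ : Function.Injective π)
    (hπG : ∀ b, (∀ g : G, g • b = b) → b ∈ Set.range π) {v : B →ₐ[K] L} {δ : R →ₗ[K] L}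
    (hδ : ∀ a b, δ (a * b) = v (π a) * δ b + v (π b) * δ a)
    (hδG : ∀ a, (∀ g : G, g • π a = π a) → δ a = 0)
    (hv : ∀ g : G, (∀ a, v (g • π a) = v (π a)) → ∀ a, g • π a = π a) : δ = 0 := by
  let W : Option {g : G // ∃ a, g • π a ≠ π a} → Submodule K R
    | none => LinearMap.ker δ
    | some g => LinearMap.eqLocus
        (v.toLinearMap ∘ₗ DistribSMul.toLinearMap K B g.1 ∘ₗ π.toLinearMap)
        (v.toLinearMap ∘ₗ π.toLinearMap)
  have hcover : ⋃ o, (W o : Set R) = Set.univ := by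
    refine Set.eq_univ_of_forall fun c => Set.mem_iUnion.mpr ?_
    by_contra! hc
    refine hc none (leibniz_apply_eq_zero_of_separated (π := (π : R →+* B)) (v := (v : B →+* L))
      (δ := δ.toAddMonoidHom) hπ hπG hδ hδG fun g hg => ?_)
    by_contra hgc
    exact hc (some ⟨g, c, hgc⟩) hg
  obtain ⟨_ | ⟨g, a, hga⟩, hW⟩ := Subspace.exists_eq_top_of_iUnion_eq_univ hcover
  · exact LinearMap.ker_eq_top.mp hW
  · exact absurd (hv g (fun b => (hW ▸ Submodule.mem_top : b ∈ W (some ⟨g, a, hga⟩))) a) hga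

lemma exists_map_smul_eq {u v : B →ₐ[K] L} (huv : ∀ b, (∀ g : G, g • b = b) → u b = v b) :
    ∃ g : G, ∀ b, u b = v (g • b) := by
  cases nonempty_fintype G
  let W (g : G) : Submodule K B :=
    LinearMap.eqLocus u.toLinearMap (v.toLinearMap ∘ₗ DistribSMul.toLinearMap K B g)
  have hcover : ⋃ g, (W g : Set B) = Set.univ := by
    refine Set.eq_univ_of_forall fun b => Set.mem_iUnion.mpr ?_
    have hmap : (MulSemiringAction.charpoly G b).map (u : B →+* L) =
        (MulSemiringAction.charpoly G b).map (v : B →+* L) := by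
      ext n
      rw [Polynomial.coeff_map, Polynomial.coeff_map]
      exact huv _ (MulSemiringAction.smul_coeff_charpoly b n)
    have hroot := congrArg (Polynomial.eval (u b)) hmap
    rw [← RingHom.coe_coe u, Polynomial.eval_map_apply, MulSemiringAction.eval_charpoly, map_zero,
      MulSemiringAction.charpoly_eq, Polynomial.map_prod, Polynomial.eval_prod, eq_comm,
      Finset.prod_eq_zero_iff] at hroot
    obtain ⟨g, -, hg⟩ := hroot
    exact ⟨g, by simpa [W, sub_eq_zero] using hg⟩
  obtain ⟨g, hg⟩ := Subspace.exists_eq_top_of_iUnion_eq_univ hcover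
  exact ⟨g, fun b => (hg ▸ Submodule.mem_top : b ∈ W g)⟩

end Unramified

section SubgroupFixedPoints

variable {K Γ B L : Type*} [Field K] [Infinite K] [CommRing B] [CommRing L] [IsDomain L]
  [Algebra K B] [Algebra K L] [Group Γ] [MulSemiringAction Γ B] [SMulCommClass Γ K B]

lemma mem_of_forall_mem_fixedPoints_map_smul_eq {G H : Subgroup Γ} [Finite H] (hHG : H ≤ G)
    {v : B →ₐ[K] L} (hv : ∀ g ∈ G, (∀ b, v (g • b) = v b) → g ∈ H) {g : Γ} (hg : g ∈ G)
    (hvg : ∀ b ∈ FixedPoints.subalgebra K B H, v (g • b) = v b) : g ∈ H := by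
  obtain ⟨h, hh⟩ := exists_map_smul_eq (G := H)
    (u := v.comp (MulSemiringAction.toAlgHom K B g)) (v := v) hvg
  have hinertia (b : B) : v ((g * (h : Γ)⁻¹) • b) = v b := by
    have hb := hh ((h : Γ)⁻¹ • b)
    rwa [Subgroup.smul_def, smul_inv_smul, AlgHom.comp_apply, MulSemiringAction.toAlgHom_apply,
      smul_smul] at hb
  exact (Subgroup.mul_mem_cancel_right H (inv_mem h.2)).mp
    (hv _ (mul_mem hg (inv_mem (hHG h.2))) hinertia)

lemma le_of_fixedPoints_le [IsDomain B] [FaithfulSMul Γ B] {G H : Subgroup Γ} [Finite H]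
    (hHG : H ≤ G) (hle : FixedPoints.subalgebra K B H ≤ FixedPoints.subalgebra K B G) : G ≤ H :=
  fun g hg => mem_of_forall_mem_fixedPoints_map_smul_eq (v := AlgHom.id K B) hHG
    (fun _ _ hfix => eq_of_smul_eq_smul (α := B) (fun b => (hfix b).trans (one_smul Γ b).symm) ▸
      one_mem H) hg fun _ hb => hle hb ⟨g, hg⟩

end SubgroupFixedPoints

section DirectionalDerivative

variable {σ K L : Type*} [Field K] [Fintype σ] [CommRing L] [Algebra K L]

/-- The derivative along the vector `c` at the `L`-valued point `χ`: it sends `Q` to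
`∑ k, (∂Q/∂xₖ)(χ) * c k`. -/
noncomputable def directionalDeriv (χ : MvPolynomial σ K →ₐ[K] L) (c : σ → L) :
    MvPolynomial σ K →ₗ[K] L :=
  ∑ k, LinearMap.mulRight K (c k) ∘ₗ χ.toLinearMap ∘ₗ (pderiv k).toLinearMap

variable (χ : MvPolynomial σ K →ₐ[K] L) (c : σ → L)

lemma directionalDeriv_apply (Q : MvPolynomial σ K) :
    directionalDeriv χ c Q = ∑ k, χ (pderiv k Q) * c k := by
  simp [directionalDeriv]

lemma directionalDeriv_X (k : σ) : directionalDeriv χ c (X k) = c k := by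
  classical simp [directionalDeriv_apply, pderiv_X, Pi.single_apply, apply_ite]

lemma directionalDeriv_mul (P Q : MvPolynomial σ K) :
    directionalDeriv χ c (P * Q) =
      χ P * directionalDeriv χ c Q + χ Q * directionalDeriv χ c P := by
  simp only [directionalDeriv_apply, pderiv_mul, map_add, map_mul, Finset.mul_sum,
    ← Finset.sum_add_distrib]
  exact Finset.sum_congr rfl fun k _ => by ring

lemma directionalDeriv_aeval {ι : Type*} [Fintype ι] (P : ι → MvPolynomial σ K)
    (Q : MvPolynomial ι K) :
    directionalDeriv χ c (aeval P Q) =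
      ∑ i, χ (aeval P (pderiv i Q)) * directionalDeriv χ c (P i) := by
  simp only [directionalDeriv_apply, pderiv_aeval, map_sum, map_mul, Finset.mul_sum,
    Finset.sum_mul]
  rw [Finset.sum_comm]
  simp only [mul_assoc]

end DirectionalDerivative

section Jacobian

variable {σ K : Type*} [Field K] [Infinite K] [Fintype σ] [DecidableEq σ]
  {G H : Subgroup (GL σ K)} [Finite G]

lemma map_det_jacobian_ne_zero {L : Type*} [CommRing L] [IsDomain L] [Algebra K L]
    {ψ φ P : σ → MvPolynomial σ K} (hψ : AlgebraicIndependent K ψ)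
    (hH : invariants H = Algebra.adjoin K (Set.range ψ))
    (hG : invariants G = Algebra.adjoin K (Set.range φ)) (hφ : ∀ i, φ i = aeval ψ (P i))
    (hHG : H ≤ G) {v : MvPolynomial σ K →ₐ[K] L}
    (hv : ∀ M ∈ G, (∀ f : MvPolynomial σ K, v (M • f) = v f) → M ∈ H) :
    v (aeval ψ (Matrix.of fun i k => pderiv k (P i)).det) ≠ 0 := by
  have : Finite H := Finite.of_injective _ (Subgroup.inclusion_injective hHG)
  have hrange {f : MvPolynomial σ K} (hf : f ∈ invariants H) :
      ∃ Q : MvPolynomial σ K, aeval ψ Q = f := by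
    rwa [hH, Algebra.adjoin_range_eq_range_aeval] at hf
  intro hdet
  rw [AlgHom.map_det, AlgHom.map_det, ← Matrix.exists_mulVec_eq_zero_iff] at hdet
  obtain ⟨c, hc0, hc⟩ := hdet
  have hPc (i : σ) : directionalDeriv (v.comp (aeval ψ)) c (P i) = 0 :=
    (directionalDeriv_apply _ c (P i)).trans (congrFun hc i)
  suffices hzero : directionalDeriv (v.comp (aeval ψ)) c = 0 from
    hc0 (funext fun k => by rw [← directionalDeriv_X (v.comp (aeval ψ)) c k, hzero]; rfl)
  refine leibniz_eq_zero_of_unramified (G := G) (π := aeval ψ) (v := v) hψ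
    (fun f hf => hrange fun M => hf ⟨M, hHG M.2⟩) (directionalDeriv_mul _ c) ?_ ?_
  · intro a ha
    have hmem : aeval ψ a ∈ invariants G := ha
    rw [hG, Algebra.adjoin_range_eq_range_aeval] at hmem
    obtain ⟨Q, hQ⟩ := hmem
    have haQ : a = aeval P Q := hψ (by
      rw [comp_aeval_apply]
      simp only [← hφ]
      exact hQ.symm)
    simp only [haQ, directionalDeriv_aeval, hPc, mul_zero, Finset.sum_const_zero]
  · intro M hM a
    have hMH : (M : GL σ K) ∈ H := by
      refine mem_of_forall_mem_fixedPoints_map_smul_eq hHG hv M.2 fun f hf => ?_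
      obtain ⟨Q, rfl⟩ := hrange hf
      exact hM Q
    have ha : aeval ψ a ∈ invariants H := by
      rw [hH, Algebra.adjoin_range_eq_range_aeval]
      exact ⟨a, rfl⟩
    exact ha ⟨M, hMH⟩

lemma isUnit_aeval_det_jacobian {ψ φ P : σ → MvPolynomial σ K} (hψ : AlgebraicIndependent K ψ)
    (hH : invariants H = Algebra.adjoin K (Set.range ψ))
    (hG : invariants G = Algebra.adjoin K (Set.range φ)) (hφ : ∀ i, φ i = aeval ψ (P i))
    (hHG : H ≤ G) (hrefl : ∀ M ∈ G, IsPseudoReflection M → M ∈ H) :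
    IsUnit (aeval ψ (Matrix.of fun i k => pderiv k (P i)).det) := by
  by_contra hunit
  have hne : aeval ψ (Matrix.of fun i k => pderiv k (P i)).det ≠ 0 :=
    map_det_jacobian_ne_zero hψ hH hG hφ hHG (v := AlgHom.id K _) fun M _ hM =>
      eq_of_smul_eq_smul (fun f => (hM f).trans (one_smul _ f).symm) ▸ one_mem H
  obtain ⟨q, hq, hdvd⟩ := WfDvdMonoid.exists_irreducible_factor hunit hne
  have : (Ideal.span {q}).IsPrime := (Ideal.span_singleton_prime hq.ne_zero).mpr hq.prime
  refine map_det_jacobian_ne_zero hψ hH hG hφ hHG (v := Ideal.Quotient.mkₐ K (Ideal.span {q}))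
    (fun M hMG hM => ?_)
    (Ideal.Quotient.eq_zero_iff_mem.mpr (Ideal.mem_span_singleton.mpr hdvd))
  rcases eq_one_or_isPseudoReflection_of_dvd_smul_sub hq.not_isUnit fun f =>
    Ideal.mem_span_singleton.mp (Ideal.Quotient.eq.mp (hM f)) with rfl | hMrefl
  · exact one_mem H
  · exact hrefl M hMG hMrefl

end Jacobian

section InverseFunction

variable {σ ι R : Type*} [CommRing R]

lemma lt_weight_of_ne_single {w : ι → ℕ} (hw : ∀ i, 1 ≤ w i) {m : ι →₀ ℕ} {k : ι}
    (hk : m k ≠ 0) (hm : m ≠ Finsupp.single k 1) : w k < Finsupp.weight w m := by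
  obtain ⟨m, rfl⟩ := exists_add_of_le
    (Finsupp.single_le_iff.mpr (Nat.one_le_iff_ne_zero.mpr hk) : Finsupp.single k 1 ≤ m)
  have hweight : Finsupp.weight w m ≠ 0 := by
    have := Finsupp.nonTorsionWeight_of ℕ w fun i => Nat.one_le_iff_ne_zero.mp (hw i)
    rw [ne_eq, Finsupp.weight_eq_zero_iff_eq_zero]
    rintro rfl
    exact hm (add_zero _)
  rw [map_add, Finsupp.weight_single, one_smul]
  omega

lemma homogeneousComponent_aeval_mem {A : Subalgebra R (MvPolynomial σ R)}
    {f : ι → MvPolynomial σ R} {w : ι → ℕ} (hw : ∀ i, 1 ≤ w i)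
    (hf : ∀ i, (f i).IsHomogeneous (w i)) {Q : MvPolynomial ι R}
    (hQ : ∀ k, coeff (Finsupp.single k 1) Q = 0) {d : ℕ} (hA : ∀ k, w k < d → f k ∈ A) :
    homogeneousComponent d (aeval f Q) ∈ A := by
  rw [homogeneousComponent_aeval hf, aeval_def, eval₂_eq]
  refine sum_mem fun m hm => mul_mem (A.algebraMap_mem _) (prod_mem fun k hk => pow_mem (hA k ?_) _)
  rw [mem_support_iff, coeff_weightedHomogeneousComponent, ne_eq, ite_eq_right_iff,
    Classical.not_imp] at hm
  obtain ⟨rfl, hmQ⟩ := hm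
  exact lt_weight_of_ne_single hw (Finsupp.mem_support_iff.mp hk) fun h => hmQ (h ▸ hQ k)

lemma mem_of_sub_aeval_mem {A : Subalgebra R (MvPolynomial σ R)}
    (hA : ∀ f ∈ A, ∀ d, homogeneousComponent d f ∈ A) {f : ι → MvPolynomial σ R} {w : ι → ℕ}
    (hw : ∀ i, 1 ≤ w i) (hf : ∀ i, (f i).IsHomogeneous (w i)) {Q : ι → MvPolynomial ι R}
    (hQ : ∀ j k, coeff (Finsupp.single k 1) (Q j) = 0) (hfQ : ∀ j, f j - aeval f (Q j) ∈ A)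
    (j : ι) : f j ∈ A := by
  induction hj : w j using Nat.strong_induction_on generalizing j with
  | _ d ih =>
    have hcomp := hA _ (hfQ j) d
    rw [map_sub, homogeneousComponent_of_mem (hf j), if_pos hj.symm] at hcomp
    simpa only [sub_add_cancel] using add_mem hcomp
      (homogeneousComponent_aeval_mem hw hf (hQ j) fun k hk => ih _ hk k rfl)

lemma coeff_single_eq_constantCoeff_pderiv (P : MvPolynomial σ R) (k : σ) :
    coeff (Finsupp.single k 1) P = constantCoeff (pderiv k P) := by
  rw [constantCoeff_eq, coeff_pderiv]
  simp

lemma exists_matrix_coeff_single_X_sub_eq_zero {K : Type*} [Field K] [Fintype σ] [DecidableEq σ]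
    {P : σ → MvPolynomial σ K}
    (hP : constantCoeff (Matrix.of fun i k => pderiv k (P i)).det ≠ 0) :
    ∃ A : Matrix σ σ K, ∀ j k, coeff (Finsupp.single k 1) (X j - ∑ i, C (A j i) * P i) = 0 := by
  let J : Matrix σ σ K := (Matrix.of fun i k => pderiv k (P i)).map constantCoeff
  have hJ : J⁻¹ * J = 1 := Matrix.nonsing_inv_mul _ (by
    rwa [RingHom.map_det, ← isUnit_iff_ne_zero] at hP)
  refine ⟨J⁻¹, fun j k => ?_⟩
  have hjk : ∑ i, J⁻¹ j i * constantCoeff (pderiv k (P i)) = (1 : Matrix σ σ K) j k := by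
    rw [← hJ]
    rfl
  simp only [coeff_single_eq_constantCoeff_pderiv, map_sub, map_sum, pderiv_C_mul, map_mul,
    constantCoeff_C, hjk, pderiv_X]
  simp [Pi.single_apply, Matrix.one_apply, apply_ite constantCoeff]

lemma mem_of_constantCoeff_det_jacobian_ne_zero {K : Type*} [Field K] [Fintype ι] [DecidableEq ι]
    {A : Subalgebra K (MvPolynomial σ K)} (hA : ∀ f ∈ A, ∀ d, homogeneousComponent d f ∈ A)
    {f : ι → MvPolynomial σ K} {w : ι → ℕ} (hw : ∀ i, 1 ≤ w i)
    (hf : ∀ i, (f i).IsHomogeneous (w i)) {P : ι → MvPolynomial ι K} (hP : ∀ i, aeval f (P i) ∈ A)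
    (hdet : constantCoeff (Matrix.of fun i k => pderiv k (P i)).det ≠ 0) (j : ι) : f j ∈ A := by
  obtain ⟨B, hB⟩ := exists_matrix_coeff_single_X_sub_eq_zero hdet
  refine mem_of_sub_aeval_mem hA hw hf hB (fun j => ?_) j
  simp only [map_sub, aeval_X, map_sum, map_mul, sub_sub_cancel, algHom_C]
  exact sum_mem fun i _ => mul_mem (A.algebraMap_mem _) (hP i)

lemma constantCoeff_aeval {f : ι → MvPolynomial σ R} (hf : ∀ i, constantCoeff (f i) = 0)
    (P : MvPolynomial ι R) : constantCoeff (aeval f P) = constantCoeff P := by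
  rw [map_aeval, show (fun i => constantCoeff (f i)) = 0 from funext hf]
  simp

end InverseFunction

section Converse

variable {σ K : Type*} [Field K] [Fintype σ] [DecidableEq σ]
  {G : Subgroup (GL σ K)} [Finite G]

lemma invariants_le_of_forall_isPseudoReflection_mem [Infinite K] {H : Subgroup (GL σ K)}
    (hHG : H ≤ G) (hrefl : ∀ M ∈ G, IsPseudoReflection M → M ∈ H)
    {ψ φ : σ → MvPolynomial σ K} {e : σ → ℕ}
    (he : ∀ i, 1 ≤ e i) (hψe : ∀ i, (ψ i).IsHomogeneous (e i)) (hψ : AlgebraicIndependent K ψ)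
    (hH : invariants H = Algebra.adjoin K (Set.range ψ))
    (hG : invariants G = Algebra.adjoin K (Set.range φ)) : invariants H ≤ invariants G := by
  have hφG (i : σ) : φ i ∈ invariants G := hG ▸ Algebra.subset_adjoin ⟨i, rfl⟩
  have hφH (i : σ) : ∃ P : MvPolynomial σ K, φ i = aeval ψ P := by
    have hmem : φ i ∈ invariants H := fun M => hφG i ⟨M, hHG M.2⟩
    rw [hH, Algebra.adjoin_range_eq_range_aeval] at hmem
    exact hmem.imp fun _ => Eq.symm
  choose P hP using hφH
  have hdet : constantCoeff (Matrix.of fun i k => pderiv k (P i)).det ≠ 0 := by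
    have hunit := (isUnit_aeval_det_jacobian hψ hH hG hP hHG hrefl).map constantCoeff
    rw [constantCoeff_aeval fun i => constantCoeff_eq_zero_of_isHomogeneous (hψe i) (he i)] at hunit
    exact hunit.ne_zero
  rw [hH, Algebra.adjoin_le_iff]
  rintro _ ⟨j, rfl⟩
  exact mem_of_constantCoeff_det_jacobian_ne_zero
    (fun f hf d => homogeneousComponent_mem_invariants hf d) he hψe (fun i => hP i ▸ hφG i) hdet j

theorem closure_eq_of_invariants_eq_adjoin [CharZero K] {φ : σ → MvPolynomial σ K}
    (hG : invariants G = Algebra.adjoin K (Set.range φ)) :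
    Subgroup.closure {M | M ∈ G ∧ IsPseudoReflection M} = G := by
  set H := Subgroup.closure {M | M ∈ G ∧ IsPseudoReflection M}
  have hHG : H ≤ G := (Subgroup.closure_le G).mpr fun M hM => hM.1
  have hrefl (M : GL σ K) (hMG : M ∈ G) (hM : IsPseudoReflection M) : M ∈ H :=
    Subgroup.subset_closure ⟨hMG, hM⟩
  have : Finite H := Finite.of_injective _ (Subgroup.inclusion_injective hHG)
  have hHrefl : Subgroup.closure {M | M ∈ H ∧ IsPseudoReflection M} = H :=
    le_antisymm ((Subgroup.closure_le H).mpr fun M hM => hM.1)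
      (Subgroup.closure_mono fun M hM => ⟨hrefl M hM.1 hM.2, hM.2⟩)
  obtain ⟨ψ, e, he, hψe, hψ, hH⟩ := exists_generators_of_closure_eq hHrefl
  exact le_antisymm hHG (le_of_fixedPoints_le hHG
    (invariants_le_of_forall_isPseudoReflection_mem hHG hrefl he hψe hψ hH hG))

end Converse

lemma gammaAct_apply (n : ℕ) (M : GL (Fin n) ℂ) (f : polyS n) : gammaAct n M f = M • f := by
  rw [smul_eq_aeval]
  simp only [gammaAct, C_mul_X_eq_monomial]
  rfl

lemma isReflection_iff_isPseudoReflection (n : ℕ) (M : GL (Fin n) ℂ) :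
    IsReflection n M ↔ IsPseudoReflection M := by
  have hrank : ((M : Matrix (Fin n) (Fin n) ℂ) - 1).rank + Module.finrank ℂ
      (LinearMap.ker (Matrix.toLin' (M : Matrix (Fin n) (Fin n) ℂ) - LinearMap.id)) = n := by
    rw [← Matrix.toLin'_one, ← map_sub, Matrix.rank, ← Matrix.toLin'_apply',
      LinearMap.finrank_range_add_finrank_ker, Module.finrank_fin_fun]
  constructor
  · rintro ⟨hne, hker⟩
    exact isPseudoReflection_iff_rank_le_one.mpr ⟨hne, by omega⟩
  · intro hM
    refine ⟨(isPseudoReflection_iff_rank_le_one.mp hM).1, ?_⟩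
    rw [IsPseudoReflection] at hM
    omega

end ChevalleyShephardTodd

open ChevalleyShephardTodd

theorem stmt13_general {σ K : Type*} [Field K] [CharZero K] [Fintype σ] [DecidableEq σ]
    (G : Subgroup (GL σ K)) [Finite G] :
    Subgroup.closure {M | M ∈ G ∧ IsPseudoReflection M} = G ↔
      ∃ (φ : σ → MvPolynomial σ K) (d : σ → ℕ), (∀ i, 1 ≤ d i) ∧
        (∀ i, (φ i).IsHomogeneous (d i)) ∧ AlgebraicIndependent K φ ∧
        invariants G = Algebra.adjoin K (Set.range φ) :=
  ⟨exists_generators_of_closure_eq,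
    fun ⟨_, _, _, _, _, hG⟩ => closure_eq_of_invariants_eq_adjoin hG⟩

theorem stmt13 (n : ℕ) (hn : 1 ≤ n) (G : Subgroup (GL (Fin n) ℂ)) (hGfin : Finite G) :
    (Subgroup.closure {M : GL (Fin n) ℂ | M ∈ G ∧ IsReflection n M} = G) ↔
    (∃ (φ : Fin n → polyS n) (d : Fin n → ℕ),
      (∀ i, 1 ≤ d i) ∧ (∀ i, (φ i).IsHomogeneous (d i)) ∧
      AlgebraicIndependent ℂ φ ∧
      {f : polyS n | ∀ M ∈ G, gammaAct n M f = f} =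
        (Algebra.adjoin ℂ (Set.range φ) : Subalgebra ℂ (polyS n))) := by
  have hinv : {f : polyS n | ∀ M ∈ G, gammaAct n M f = f} = invariants G := by
    ext f
    simp only [gammaAct_apply, Set.mem_ofPred_eq, SetLike.mem_coe, mem_invariants]
  simp only [isReflection_iff_isPseudoReflection, hinv, SetLike.coe_set_eq]
  exact stmt13_general G
end

section
/- Let S = ℂ[x_1,x_2], let L = ℂ(x_1,x_2) be its fraction field, let φ_1 = x_1² + x_2², φ_2 = x_1²x_2², and let J = [[2x_1, 2x_2],[2x_1x_2², 2x_1²x_2]] be the Jacobian matrix of (φ_1,φ_2), viewed over L. Define D_1 : S → L by D_1(p) = (x_1·∂p/∂x_1 − x_2·∂p/∂x_2)/(2(x_1² − x_2²)), applied entrywise to J. Then det(J) ≠ 0, and (D_1 J)·J^{-1} = (2(φ_1² − 4φ_2))^{-1}·[[φ_1, −2],[−2φ_2, φ_1]] as 2×2 matrices over L. -/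
open MvPolynomial

noncomputable abbrev polyS2 := MvPolynomial (Fin 2) ℂ
noncomputable abbrev fracL2 := FractionRing polyS2
noncomputable abbrev toL2 : polyS2 →+* fracL2 := algebraMap polyS2 fracL2

/-- The image of the variable `x₁` in `L`. -/
noncomputable def x₁ : fracL2 := toL2 (MvPolynomial.X 0)
/-- The image of the variable `x₂` in `L`. -/
noncomputable def x₂ : fracL2 := toL2 (MvPolynomial.X 1)

/-- `D₁(p) = (x₁·∂p/∂x₁ − x₂·∂p/∂x₂) / (2(x₁² − x₂²))`. -/
noncomputable def D₁ (p : polyS2) : fracL2 :=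
  (x₁ * toL2 (MvPolynomial.pderiv 0 p) - x₂ * toL2 (MvPolynomial.pderiv 1 p)) /
    (2 * (x₁ ^ 2 - x₂ ^ 2))

/-- The Jacobian matrix of `(φ₁, φ₂) = (x₁² + x₂², x₁²x₂²)` over `S`. -/
noncomputable def Jdih : Matrix (Fin 2) (Fin 2) polyS2 :=
  !![2 * MvPolynomial.X 0, 2 * MvPolynomial.X 1;
     2 * MvPolynomial.X 0 * MvPolynomial.X 1 ^ 2, 2 * MvPolynomial.X 0 ^ 2 * MvPolynomial.X 1]

/-!
The derivation `D₁` acts on `x₁` and `x₂` as multiplication by `c` and `-c`, where `c = 1 / (2δ)`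
and `δ = x₁² - x₂²`. Every entry of `J` is a multiple of a monomial, so it is an eigenvector of
`D₁` too, and `D₁ J` is `c` times `J` with its off-diagonal entries negated. The matrix
`[[φ₁, -2], [-2φ₂, φ₁]]` takes `J` to `δ` times that same sign change of `J`, and the discriminant
`φ₁² - 4φ₂` of the polynomial with roots `x₁²` and `x₂²` is `δ²`.
-/

section LogDeriv

variable {R A K : Type*} [CommSemiring R] [CommSemiring A] [Algebra R A] [CommRing K] [Algebra A K]
  [Module R K]

/-- `c` is a logarithmic derivative of `a` along `D`, so that products of such elements are
differentiated by adding. Stating this as `D a = c * a` avoids dividing by the image of `a`, which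
may be zero. -/
def HasLogDeriv (D : Derivation R A K) (a : A) (c : K) : Prop :=
  D a = c * algebraMap A K a

namespace HasLogDeriv

variable {D : Derivation R A K} {a b : A} {c d : K}

theorem ofNat (D : Derivation R A K) (n : ℕ) [n.AtLeastTwo] :
    HasLogDeriv D (OfNat.ofNat n) 0 := by
  rw [HasLogDeriv, zero_mul, ← Nat.cast_ofNat, D.map_natCast]

theorem mul (ha : HasLogDeriv D a c) (hb : HasLogDeriv D b d) : HasLogDeriv D (a * b) (c + d) := by
  rw [HasLogDeriv] at *
  rw [D.leibniz, ha, hb, Algebra.smul_def, Algebra.smul_def, map_mul]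
  ring

theorem sq (ha : HasLogDeriv D a c) : HasLogDeriv D (a ^ 2) (2 * c) := by
  rw [pow_two, two_mul]
  exact ha.mul ha

end HasLogDeriv

end LogDeriv

/-- The Jacobian matrix of `(x² + y², x²y²)` with respect to `(x, y)`, evaluated at `(a, b)`.
The matrix `Jdih` and its image over `L` are both of this form. -/
def dihedralJacobian {B : Type*} [CommSemiring B] (a b : B) : Matrix (Fin 2) (Fin 2) B :=
  !![2 * a, 2 * b; 2 * a * b ^ 2, 2 * a ^ 2 * b]

theorem map_dihedralJacobian {B C : Type*} [CommSemiring B] [CommSemiring C] (f : B →+* C)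
    (a b : B) : (dihedralJacobian a b).map f = dihedralJacobian (f a) (f b) := by
  ext i j
  fin_cases i <;> fin_cases j <;> simp [dihedralJacobian, map_ofNat f 2]

theorem det_dihedralJacobian {B : Type*} [CommRing B] (a b : B) :
    (dihedralJacobian a b).det = 2 * 2 * a * b * (a ^ 2 - b ^ 2) := by
  rw [dihedralJacobian, Matrix.det_fin_two_of]
  ring

theorem det_dihedralJacobian_ne_zero {B : Type*} [CommRing B] [NoZeroDivisors B] [NeZero (2 : B)]
    {a b : B} (ha : a ≠ 0) (hb : b ≠ 0) (hab : a ^ 2 - b ^ 2 ≠ 0) :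
    (dihedralJacobian a b).det ≠ 0 := by
  rw [det_dihedralJacobian]
  exact mul_ne_zero
    (mul_ne_zero (mul_ne_zero (mul_ne_zero two_ne_zero two_ne_zero) ha) hb) hab

theorem mul_dihedralJacobian {B : Type*} [CommRing B] (a b : B) :
    !![a ^ 2 + b ^ 2, -2; -2 * (a ^ 2 * b ^ 2), a ^ 2 + b ^ 2] * dihedralJacobian a b =
      (a ^ 2 - b ^ 2) • !![2 * a, -(2 * b); -(2 * a * b ^ 2), 2 * a ^ 2 * b] := by
  ext i j
  fin_cases i <;> fin_cases j <;> simp [dihedralJacobian] <;> ring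

theorem HasLogDeriv.map_dihedralJacobian {R A K : Type*} [CommSemiring R] [CommSemiring A]
    [Algebra R A] [CommRing K] [Algebra A K] [Module R K] {D : Derivation R A K} {a b : A} {c : K}
    (ha : HasLogDeriv D a c) (hb : HasLogDeriv D b (-c)) :
    letI α := algebraMap A K a
    letI β := algebraMap A K b
    (dihedralJacobian a b).map D =
      c • !![2 * α, -(2 * β); -(2 * α * β ^ 2), 2 * α ^ 2 * β] := by
  have two : HasLogDeriv D (2 : A) 0 := .ofNat D 2
  have entry₁₁ : D (2 * a) = _ := two.mul ha
  have entry₁₂ : D (2 * b) = _ := two.mul hb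
  have entry₂₁ : D (2 * a * b ^ 2) = _ := (two.mul ha).mul hb.sq
  have entry₂₂ : D (2 * a ^ 2 * b) = _ := (two.mul ha.sq).mul hb
  simp only [map_mul, map_pow, map_ofNat] at entry₁₁ entry₁₂ entry₂₁ entry₂₂
  ext i j
  fin_cases i <;> fin_cases j <;>
    simp only [dihedralJacobian, Fin.zero_eta, Fin.mk_one, Matrix.map_apply, Matrix.smul_apply,
      Matrix.of_apply, Matrix.cons_val, smul_eq_mul, entry₁₁, entry₁₂, entry₂₁, entry₂₂] <;>
    ring

theorem stmt18_general {R A K : Type*} [CommSemiring R] [CommSemiring A] [Algebra R A] [Field K]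
    [NeZero (2 : K)] [Algebra A K] [Module R K] {D : Derivation R A K} {a b : A}
    (ha₀ : algebraMap A K a ≠ 0) (hb₀ : algebraMap A K b ≠ 0)
    (hab : algebraMap A K a ^ 2 - algebraMap A K b ^ 2 ≠ 0)
    (ha : HasLogDeriv D a (2 * (algebraMap A K a ^ 2 - algebraMap A K b ^ 2))⁻¹)
    (hb : HasLogDeriv D b (-(2 * (algebraMap A K a ^ 2 - algebraMap A K b ^ 2))⁻¹)) :
    letI φ₁ := algebraMap A K (a ^ 2 + b ^ 2)
    letI φ₂ := algebraMap A K (a ^ 2 * b ^ 2)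
    ((dihedralJacobian a b).map (algebraMap A K)).det ≠ 0 ∧
    (dihedralJacobian a b).map D * ((dihedralJacobian a b).map (algebraMap A K))⁻¹ =
      (2 * (φ₁ ^ 2 - 4 * φ₂))⁻¹ • !![φ₁, -2; -2 * φ₂, φ₁] := by
  simp only [map_dihedralJacobian, map_add, map_mul, map_pow, ha.map_dihedralJacobian hb]
  set α := algebraMap A K a
  set β := algebraMap A K b
  have hdet : (dihedralJacobian α β).det ≠ 0 := det_dihedralJacobian_ne_zero ha₀ hb₀ hab
  have discriminant : (α ^ 2 + β ^ 2) ^ 2 - 4 * (α ^ 2 * β ^ 2) = (α ^ 2 - β ^ 2) ^ 2 := by ring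
  have scalar : (2 * (α ^ 2 - β ^ 2))⁻¹ = (2 * (α ^ 2 - β ^ 2) ^ 2)⁻¹ * (α ^ 2 - β ^ 2) := by
    field_simp
  refine ⟨hdet, ?_⟩
  rw [discriminant, scalar, mul_smul, ← mul_dihedralJacobian, ← Matrix.smul_mul,
    Matrix.mul_nonsing_inv_cancel_right _ _ hdet.isUnit]

/-- The map `D₁` bundled as a derivation from `S` to `L`, which gives it the Leibniz rule. -/
noncomputable def D₁Derivation : Derivation ℂ polyS2 fracL2 :=
  (2 * (x₁ ^ 2 - x₂ ^ 2))⁻¹ •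
    (x₁ • (Algebra.linearMap polyS2 fracL2).compDer (pderiv 0) -
      x₂ • (Algebra.linearMap polyS2 fracL2).compDer (pderiv 1))

theorem coe_D₁Derivation : ⇑D₁Derivation = D₁ := by
  ext p
  simp [D₁Derivation, D₁, div_eq_inv_mul]

theorem hasLogDeriv_D₁Derivation_X_zero :
    HasLogDeriv D₁Derivation (X 0) (2 * (x₁ ^ 2 - x₂ ^ 2))⁻¹ := by
  simp [HasLogDeriv, coe_D₁Derivation, D₁, x₁, div_eq_inv_mul]

theorem hasLogDeriv_D₁Derivation_X_one :
    HasLogDeriv D₁Derivation (X 1) (-(2 * (x₁ ^ 2 - x₂ ^ 2))⁻¹) := by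
  simp [HasLogDeriv, coe_D₁Derivation, D₁, x₂, div_eq_inv_mul]

theorem X_sq_sub_X_sq_ne_zero {σ k : Type*} [CommRing k] [Nontrivial k] {i j : σ} (hij : i ≠ j) :
    (X i ^ 2 - X j ^ 2 : MvPolynomial σ k) ≠ 0 := by
  classical
  intro h
  have eval_eq_zero := congrArg (eval (Pi.single i (1 : k))) h
  simp [hij.symm] at eval_eq_zero

theorem toL2_ne_zero {p : polyS2} (hp : p ≠ 0) : toL2 p ≠ 0 :=
  IsFractionRing.to_map_eq_zero_iff.not.mpr hp

theorem x₁_sq_sub_x₂_sq_ne_zero : x₁ ^ 2 - x₂ ^ 2 ≠ 0 := by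
  simpa only [x₁, x₂, map_sub, map_pow] using
    toL2_ne_zero (X_sq_sub_X_sq_ne_zero (zero_ne_one (α := Fin 2)))

theorem stmt18 (φ₁ φ₂ : polyS2)
    (hφ₁ : φ₁ = MvPolynomial.X 0 ^ 2 + MvPolynomial.X 1 ^ 2)
    (hφ₂ : φ₂ = MvPolynomial.X 0 ^ 2 * MvPolynomial.X 1 ^ 2) :
    (Jdih.map toL2).det ≠ 0 ∧
    (Matrix.of fun i j => D₁ (Jdih i j)) * (Jdih.map toL2)⁻¹ =
      (2 * (toL2 φ₁ ^ 2 - 4 * toL2 φ₂))⁻¹ •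
        !![toL2 φ₁, -2; -2 * toL2 φ₂, toL2 φ₁] := by
  rw [hφ₁, hφ₂, ← coe_D₁Derivation]
  exact stmt18_general (toL2_ne_zero (X_ne_zero 0)) (toL2_ne_zero (X_ne_zero 1))
    x₁_sq_sub_x₂_sq_ne_zero hasLogDeriv_D₁Derivation_X_zero hasLogDeriv_D₁Derivation_X_one
end
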